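/- For p = 1,2: (a) H²_𝔪(Z_p)_{(μ,ν)} ≅ H⁰_𝔪(H_{p−1})_{(μ,ν)} for every bidegree (μ,ν) such that H²_𝔪(K_p)_{(μ,ν)} = 0; (b) H³_𝔪(Z_p)_{(μ,ν)} = 0 for every (μ,ν) such that H²_𝔪(K_{p−1})_{(μ,ν)} = H²_𝔪(K_p)_{(μ,ν)} = H³_𝔪(K_{p+1})_{(μ,ν)} = 0. -/

import Mathlib

open MvPolynomial

noncomputable section

/-- the coordinate ring `R = k[s₀,s₁,t₀,t₁]` of `ℙ¹ × ℙ¹` (variables `0,1 ↦ s`, `2,3 ↦ t`). -/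
abbrev RR (k : Type) [Field k] := MvPolynomial (Fin 4) k

/-- `R₁ = k[s₀,s₁]`. -/
abbrev R1 (k : Type) [Field k] := MvPolynomial (Fin 2) k

/-- the homogeneous coordinate ring `S = k[x₀,…,x₃]` of `ℙ³`. -/
abbrev SS (k : Type) [Field k] := MvPolynomial (Fin 4) k

variable (k : Type) [Field k] [IsAlgClosed k]

/-- weights of the four variables `s₀,s₁,t₀,t₁` for the `(s,t)`-bigrading of `R`. -/
def stw : Fin 4 → ℤ × ℤ := fun i => if (i : ℕ) ≤ 1 then (1, 0) else (0, 1)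

/-- the bihomogeneous piece of `R` of bidegree `(μ,ν)`. -/
def Rpiece (μ ν : ℤ) : Submodule k (RR k) := weightedHomogeneousSubmodule k stw (μ, ν)

/-- the point of `𝔸⁴` corresponding to a pair of points of `𝔸²`. -/
def pt (a b : Fin 2 → k) : Fin 4 → k := ![a 0, a 1, b 0, b 1]

variable (f : Fin 4 → RR k)

/-- the set of base points of `φ` inside `ℙ¹ × ℙ¹`. -/
def BasePts : Set (Projectivization k (Fin 2 → k) × Projectivization k (Fin 2 → k)) :=
  {P | ∀ i, eval (pt k P.1.rep P.2.rep) (f i) = 0}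

/-- `(a,b) ∈ (𝔸²∖0)²` represents a base point of `φ`. -/
def IsBasePoint (a b : Fin 2 → k) : Prop :=
  a ≠ 0 ∧ b ≠ 0 ∧ ∀ i, eval (pt k a b) (f i) = 0

/-- the prime ideal of the point `((a₀:a₁),(b₀:b₁))` of `ℙ¹ × ℙ¹`. -/
def ptIdeal (a b : Fin 2 → k) : Ideal (RR k) :=
  Ideal.span {C (a 1) * X 0 - C (a 0) * X 1, C (b 1) * X 2 - C (b 0) * X 3}

/-- the ideal `J` is generated by at most `c` elements locally at the point
`((a₀:a₁),(b₀:b₁))` of `ℙ¹ × ℙ¹` (localization-free formulation). -/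
def LocGen (J : Ideal (RR k)) (a b : Fin 2 → k) (c : ℕ) : Prop :=
  ∃ h ∉ ptIdeal k a b, ∃ g : Fin c → RR k, (∀ j, g j ∈ J) ∧
    ∀ x ∈ J, ∃ t : ℕ, h ^ t * x ∈ Ideal.span (Set.range g)

/-- the Hilbert function of `R/J` in bidegree `(μ,ν)`. -/
def HFq (J : Ideal (RR k)) (μ ν : ℤ) : ℕ :=
  Module.finrank k ↥(Rpiece k μ ν) -
    Module.finrank k ↥(J.restrictScalars k ⊓ Rpiece k μ ν)

section LC

variable {B : Type} [CommRing B] {A : Type} [CommRing A] [Algebra B A]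
variable {M : Type} [AddCommGroup M] [Module A M] [Module B M] [IsScalarTower B A M]
variable (u : Fin 4 → A)

/-- Koszul sign. -/
def cechSign (J : Finset (Fin 4)) (j : Fin 4) : A := (-1 : A) ^ ((J.filter (· < j)).card)

/-- the differential of the Koszul cochain complex on the `t`-th powers of
`u₀,…,u₃`; the direct limit over `t` of its cohomology computes the local
cohomology `H^•_{(u₀,…,u₃)}(M)`. -/
def cechD (t : ℕ) : (Finset (Fin 4) → M) →ₗ[B] (Finset (Fin 4) → M) where
  toFun w J := ∑ j ∈ J, (cechSign (A := A) J j * u j ^ t) • w (J.erase j)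
  map_add' w w' := by funext J; simp [smul_add, Finset.sum_add_distrib]
  map_smul' c w := by
    funext J
    simp only [Pi.smul_apply, RingHom.id_apply, Finset.smul_sum]
    refine Finset.sum_congr rfl fun j hj => ?_
    rw [smul_comm]

/-- the transition chain map from level `t` to level `t+a`. -/
def cechTr (a : ℕ) : (Finset (Fin 4) → M) →ₗ[B] (Finset (Fin 4) → M) where
  toFun w J := ((∏ j ∈ J, u j) ^ a) • w J
  map_add' w w' := by funext J; simp
  map_smul' c w := by
    funext J
    simp only [Pi.smul_apply, RingHom.id_apply]
    rw [smul_comm]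

variable (P : ℤ → ℤ → Submodule B M)

/-- the bigraded piece `(μ,ν)` of the degree-`i` term of the Koszul cochain complex on
`u₀^t,…,u₃^t` (each `uⱼ` having bidegree `(1,1)`). -/
def cechC (t i : ℕ) (μ ν : ℤ) : Submodule B (Finset (Fin 4) → M) where
  carrier := {w | ∀ J, (J.card = i → w J ∈ P (μ + t * i) (ν + t * i)) ∧ (J.card ≠ i → w J = 0)}
  zero_mem' := by intro J; simp
  add_mem' := by
    rintro w w' hw hw' J
    refine ⟨fun h => add_mem ((hw J).1 h) ((hw' J).1 h), fun h => ?_⟩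
    simp [Pi.add_apply, (hw J).2 h, (hw' J).2 h]
  smul_mem' := by
    rintro c w hw J
    exact ⟨fun h => Submodule.smul_mem _ _ ((hw J).1 h), fun h => by simp [(hw J).2 h]⟩

/-- cocycles in bidegree `(μ,ν)` at level `t`. -/
def cocyc (t i : ℕ) (μ ν : ℤ) : Submodule B (Finset (Fin 4) → M) :=
  cechC P t i μ ν ⊓ LinearMap.ker (cechD u t)

/-- coboundaries in bidegree `(μ,ν)` at level `t`. -/
def cobd (t i : ℕ) (μ ν : ℤ) : Submodule B (Finset (Fin 4) → M) :=
  match i with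
  | 0 => ⊥
  | (j+1) => Submodule.map (cechD u t) (cechC P t j μ ν)

/-- Vanishing of the bigraded piece `H^i_{(u₀,…,u₃)}(M)_{(μ,ν)}` of local cohomology:
every cocycle at a finite level eventually becomes a coboundary in the direct limit. -/
def LCvanish (i : ℕ) (μ ν : ℤ) : Prop :=
  ∀ t : ℕ, ∀ w ∈ cocyc u P t i μ ν, ∃ a : ℕ, cechTr (B := B) u a w ∈ cobd u P (t + a) i μ ν

/-- the level-`t` cohomology of the graded piece; `H^i_{(u)}(M)_{(μ,ν)}` is the direct
limit over `t` of these. -/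
def cohPiece (t i : ℕ) (μ ν : ℤ) : Type :=
  ↥(cocyc u P t i μ ν) ⧸
    (Submodule.comap (cocyc u P t i μ ν).subtype (cobd u P t i μ ν))

instance (t i : ℕ) (μ ν : ℤ) : AddCommGroup (cohPiece u P t i μ ν) :=
  inferInstanceAs (AddCommGroup (↥(cocyc u P t i μ ν) ⧸
    (Submodule.comap (cocyc u P t i μ ν).subtype (cobd u P t i μ ν))))

instance (t i : ℕ) (μ ν : ℤ) : Module B (cohPiece u P t i μ ν) :=
  inferInstanceAs (Module B (↥(cocyc u P t i μ ν) ⧸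
    (Submodule.comap (cocyc u P t i μ ν).subtype (cobd u P t i μ ν))))

-- transition machinery
lemma cechTr_cechD (a t : ℕ) (w : Finset (Fin 4) → M) :
    cechTr (B := B) u a (cechD (B := B) u t w)
      = cechD (B := B) u (t + a) (cechTr (B := B) u a w) := by
  funext J
  show ((∏ j ∈ J, u j) ^ a) • (∑ j ∈ J, (cechSign (A := A) J j * u j ^ t) • w (J.erase j))
      = ∑ j ∈ J, (cechSign (A := A) J j * u j ^ (t + a)) •
          (((∏ j' ∈ J.erase j, u j') ^ a) • w (J.erase j))
  rw [Finset.smul_sum]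
  refine Finset.sum_congr rfl fun j hj => ?_
  rw [smul_smul, smul_smul]
  congr 1
  have hprod : ∏ j' ∈ J, u j' = u j * ∏ j' ∈ J.erase j, u j' :=
    (Finset.mul_prod_erase J u hj).symm
  rw [hprod, mul_pow, pow_add]
  ring

/-- a "degree-shift" compatibility hypothesis for the bigrading `P`: multiplication by
the `a`-th power of the product of the `u j`, `j ∈ J`, with `|J| = i`, shifts a graded
piece as expected. This holds for the natural bigradings used in this paper. -/
def TrComp : Prop :=
  ∀ (a t i : ℕ) (μ ν : ℤ), ∀ w ∈ cechC P t i μ ν,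
    cechTr (B := B) u a w ∈ cechC P (t + a) i μ ν

lemma tr_cocyc (hc : TrComp u P) {a t i : ℕ} {μ ν : ℤ} {w : Finset (Fin 4) → M}
    (hw : w ∈ cocyc u P t i μ ν) : cechTr (B := B) u a w ∈ cocyc u P (t + a) i μ ν := by
  refine ⟨hc a t i μ ν w hw.1, ?_⟩
  have h2 : cechD (B := B) u t w = 0 := hw.2
  show cechD (B := B) u (t + a) (cechTr (B := B) u a w) = 0
  rw [← cechTr_cechD, h2, map_zero]

lemma tr_cobd (hc : TrComp u P) {a t i : ℕ} {μ ν : ℤ} {w : Finset (Fin 4) → M}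
    (hw : w ∈ cobd u P t i μ ν) : cechTr (B := B) u a w ∈ cobd u P (t + a) i μ ν := by
  cases i with
  | zero =>
      simp only [cobd, Submodule.mem_bot] at hw ⊢
      rw [hw, map_zero]
  | succ j =>
      obtain ⟨v, hv, rfl⟩ := hw
      exact ⟨cechTr (B := B) u a v, hc a t j μ ν v hv, (cechTr_cechD u a t v).symm⟩

/-- the transition map between the level-`t` and level-`t'` cohomologies of the
graded piece. -/
def cohTrans (hc : TrComp u P) (i : ℕ) (μ ν : ℤ) {t t' : ℕ} (h : t ≤ t') :
    cohPiece u P t i μ ν →ₗ[B] cohPiece u P t' i μ ν :=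
  Submodule.mapQ _ _
    ((cechTr (B := B) u (t' - t)).restrict (p := cocyc u P t i μ ν)
      (q := cocyc u P t' i μ ν)
      (fun x hx => by
        have := tr_cocyc u P hc (a := t' - t) hx
        rwa [Nat.add_sub_cancel' h] at this))
    (by
      intro x hx
      simp only [Submodule.mem_comap] at hx ⊢
      show cechTr (B := B) u (t' - t) ↑x ∈ cobd u P t' i μ ν
      have := tr_cobd u P hc (a := t' - t) hx
      rwa [Nat.add_sub_cancel' h] at this)

/-- the bigraded piece `H^i_{(u₀,…,u₃)}(M)_{(μ,ν)}` of local cohomology, as the direct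
limit over `t` of the cohomologies of the Koszul cochain complexes on the `t`-th
powers of the `u j`. -/
def LCH (hc : TrComp u P) (i : ℕ) (μ ν : ℤ) : Type :=
  Module.DirectLimit (R := B) (ι := ℕ) (fun t => cohPiece u P t i μ ν)
    (fun _ _ h => cohTrans u P hc i μ ν h)

instance (hc : TrComp u P) (i : ℕ) (μ ν : ℤ) : AddCommGroup (LCH u P hc i μ ν) :=
  inferInstanceAs (AddCommGroup (Module.DirectLimit _ _))

instance (hc : TrComp u P) (i : ℕ) (μ ν : ℤ) : Module B (LCH u P hc i μ ν) :=
  inferInstanceAs (Module B (Module.DirectLimit _ _))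


end LC

/-- the four generators `s₀t₀, s₀t₁, s₁t₀, s₁t₁` of the irrelevant ideal
`𝔪 = (s₀,s₁)(t₀,t₁)` of `R`. -/
def uR : Fin 4 → RR k := fun i =>
  X (⟨(i : ℕ) / 2, by omega⟩ : Fin 4) * X (⟨2 + (i : ℕ) % 2, by omega⟩ : Fin 4)
/-- the Koszul differential `K_{p+1} → K_p` of `f` (on `p`-tensors): contraction with
`f` in the first slot. -/
def DK (p : ℕ) : ((Fin (p + 1) → Fin 4) → RR k) →ₗ[RR k] ((Fin p → Fin 4) → RR k) where
  toFun W a := ∑ i, W (Fin.cons i a) * f i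
  map_add' W W' := by funext a; simp [add_mul, Finset.sum_add_distrib]
  map_smul' c W := by
    funext a
    simp only [Pi.smul_apply, smul_eq_mul, RingHom.id_apply, Finset.mul_sum]
    exact Finset.sum_congr rfl fun i _ => by ring

/-- the alternating `p`-tensors: the Koszul module `K_p = Λ^p R⁴`. -/
def AltT (p : ℕ) : Submodule (RR k) ((Fin p → Fin 4) → RR k) where
  carrier := {W | ∀ (a : Fin p → Fin 4) (i j : Fin p), i ≠ j →
    ((a i = a j → W a = 0) ∧ W (a ∘ Equiv.swap i j) = - W a)}
  zero_mem' := by intro a i j hij; simp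
  add_mem' := by
    rintro W W' hW hW' a i j hij
    refine ⟨fun h => ?_, ?_⟩
    · simp [Pi.add_apply, (hW a i j hij).1 h, (hW' a i j hij).1 h]
    · simp [Pi.add_apply, (hW a i j hij).2, (hW' a i j hij).2]
      ring
  smul_mem' := by
    rintro c W hW a i j hij
    refine ⟨fun h => ?_, ?_⟩
    · simp [Pi.smul_apply, (hW a i j hij).1 h]
    · simp [Pi.smul_apply, (hW a i j hij).2]

/-- the `p`-cycles `Z_p` of the Koszul complex `K_•(f;R)`. -/
def ZK (p : ℕ) : Submodule (RR k) ((Fin p → Fin 4) → RR k) :=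
  match p with
  | 0 => AltT k 0
  | (q + 1) => AltT k (q + 1) ⊓ LinearMap.ker (DK k f q)

/-- the `p`-boundaries `B_p` of the Koszul complex `K_•(f;R)`. -/
def BK (p : ℕ) : Submodule (RR k) ((Fin p → Fin 4) → RR k) :=
  Submodule.map (DK k f p) (AltT k (p + 1))

/-- the Koszul homology module `H_p = Z_p/B_p` of `f`. -/
def HK (p : ℕ) : Type :=
  ↥(ZK k f p) ⧸ (Submodule.comap (ZK k f p).subtype (BK k f p))

instance (p : ℕ) : AddCommGroup (HK k f p) :=
  inferInstanceAs (AddCommGroup (↥(ZK k f p) ⧸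
    (Submodule.comap (ZK k f p).subtype (BK k f p))))

instance (p : ℕ) : Module (RR k) (HK k f p) :=
  inferInstanceAs (Module (RR k) (↥(ZK k f p) ⧸
    (Submodule.comap (ZK k f p).subtype (BK k f p))))

instance (p : ℕ) : Module k (HK k f p) :=
  inferInstanceAs (Module k (↥(ZK k f p) ⧸
    (Submodule.comap (ZK k f p).subtype (BK k f p))))

instance (p : ℕ) : IsScalarTower k (RR k) (HK k f p) :=
  inferInstanceAs (IsScalarTower k (RR k) (↥(ZK k f p) ⧸
    (Submodule.comap (ZK k f p).subtype (BK k f p))))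

/-- the bidegree-`(μ,ν)` piece of the Koszul module `K_p ≅ ⊕ R(−pm,−pn)` (ambient
`p`-tensors). -/
def KP (m n : ℕ) (p : ℕ) (μ ν : ℤ) : Submodule k ((Fin p → Fin 4) → RR k) :=
  ⨅ a : Fin p → Fin 4,
    (Rpiece k (μ - p * m) (ν - p * n)).comap (LinearMap.proj a)

/-- the bidegree-`(μ,ν)` piece of the cycles `Z_p`. -/
def PZ (m n : ℕ) (p : ℕ) (μ ν : ℤ) : Submodule k ↥(ZK k f p) :=
  Submodule.comap (((ZK k f p).subtype).restrictScalars k) (KP k m n p μ ν)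

/-- the bidegree-`(μ,ν)` piece of the Koszul homology `H_p`. -/
def PH (m n : ℕ) (p : ℕ) (μ ν : ℤ) : Submodule k (HK k f p) :=
  Submodule.map
    (((Submodule.comap (ZK k f p).subtype (BK k f p)).mkQ).restrictScalars k)
    (PZ k f m n p μ ν)


/-- the `𝔪`-torsion of the bidegree-`(μ,ν)` piece of the Koszul homology `H_q`,
i.e. `H⁰_𝔪(H_q)_{(μ,ν)}`. -/
def TorPH (m n : ℕ) (q : ℕ) (μ ν : ℤ) : Submodule k (HK k f q) where
  carrier := {x | x ∈ PH k f m n q μ ν ∧ ∃ t : ℕ, ∀ i, (uR k i) ^ t • x = 0}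
  zero_mem' := ⟨Submodule.zero_mem _, 0, fun i => smul_zero _⟩
  add_mem' := by
    rintro x y ⟨hx, tx, htx⟩ ⟨hy, ty, hty⟩
    refine ⟨Submodule.add_mem _ hx hy, tx + ty, fun i => ?_⟩
    have h1 : (uR k i) ^ (tx + ty) • x = 0 := by
      rw [pow_add, mul_comm, mul_smul, htx i, smul_zero]
    have h2 : (uR k i) ^ (tx + ty) • y = 0 := by
      rw [pow_add, mul_smul, hty i, smul_zero]
    rw [smul_add, h1, h2, add_zero]
  smul_mem' := by
    rintro c x ⟨hx, tx, htx⟩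
    refine ⟨Submodule.smul_mem _ _ hx, tx, fun i => ?_⟩
    rw [smul_comm, htx i, smul_zero]

/-!
The two statements come from the short exact sequences `0 → Z_{p+1} → K_{p+1} → B_p → 0` and
`0 → B_p → Z_p → H_p → 0`.

For the first, `K_{p+1}` is free and `Z_p` is either free or the kernel of a map between free
modules, so `H⁰_𝔪` and `H¹_𝔪` of both vanish: a cocycle of degree `1` of a free module has the form
`(u_iᵗ z)_i`, with `u_i` the generators of `𝔪`, because `s₀t₀` and `s₁t₁` are coprime. The second
sequence then identifies `H⁰_𝔪(H_p)` with `H¹_𝔪(B_p)`, and as soon as `H²_𝔪(K_{p+1})` vanishes the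
first identifies `H¹_𝔪(B_p)` with `H²_𝔪(Z_{p+1})`. The composite connecting homomorphism is
described by its graph, with no quotient `B_p` in between.

For the second, the Mayer–Vietoris sequence of `𝔪 = (s₀,s₁) ∩ (t₀,t₁)` identifies `H³_𝔪(M)` with the
top local cohomology `H⁴_{(s₀,s₁,t₀,t₁)}(M)`, whose elements are sums of fractions
`x / (s₀s₁t₀t₁)^N`. Fix a nonzero generator `f_l`. Modulo high powers of the variables, a power of
`s₀s₁t₀t₁` is a multiple `q f_l`, so `H⁴` is divisible by `f_l`; for a cycle `x` the element
`q f_l x` is the boundary of `e_l ∧ q x`, hence comes from `H⁴(K_{p+1})`.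
-/

section Cech

variable {B A M N : Type} [CommRing B] [CommRing A]
  [AddCommGroup M] [Module A M] [Module B M] [AddCommGroup N] [Module A N] [Module B N]

section Pieces

variable {P : ℤ → ℤ → Submodule B M} {Q : ℤ → ℤ → Submodule B N} {t i : ℕ} {μ ν : ℤ}

lemma mem_piece_of_eq {a b a' b' : ℤ} {x : M} (hx : x ∈ P a b) (ha : a = a') (hb : b = b') :
    x ∈ P a' b' :=
  ha ▸ hb ▸ hx

lemma single_mem_cechC {J : Finset (Fin 4)} {x : M} (hJ : J.card = i)
    (hx : x ∈ P (μ + t * i) (ν + t * i)) : Pi.single J x ∈ cechC P t i μ ν := by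
  intro J'
  rcases eq_or_ne J' J with rfl | h
  · exact ⟨fun _ => by rwa [Pi.single_eq_same], fun h => absurd hJ h⟩
  · rw [Pi.single_eq_of_ne h]
    exact ⟨fun _ => zero_mem _, fun _ => rfl⟩

lemma single_empty_mem_cechC {x : M} (hx : x ∈ P μ ν) : Pi.single ∅ x ∈ cechC P t 0 μ ν :=
  single_mem_cechC Finset.card_empty (mem_piece_of_eq hx (by simp) (by simp))

lemma eq_of_mem_cechC {w w' : Finset (Fin 4) → M} (hw : w ∈ cechC P t i μ ν)
    (hw' : w' ∈ cechC P t i μ ν) (h : ∀ J : Finset (Fin 4), J.card = i → w J = w' J) : w = w' := by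
  funext J
  by_cases hJ : J.card = i
  · exact h J hJ
  · rw [(hw J).2 hJ, (hw' J).2 hJ]

lemma comp_mem_cechC (φ : M →ₗ[A] N) (hφ : ∀ a b, ∀ x ∈ P a b, φ x ∈ Q a b)
    {w : Finset (Fin 4) → M} (hw : w ∈ cechC P t i μ ν) : φ ∘ w ∈ cechC Q t i μ ν := fun J =>
  ⟨fun h => hφ _ _ _ ((hw J).1 h), fun h => by rw [Function.comp_apply, (hw J).2 h, map_zero]⟩

end Pieces

section Degree

/-- Multiplication by each `u j` raises the bidegree of the pieces `P μ ν` by `(1,1)`, as it does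
for the four generators of `𝔪` acting on a bigraded `R`-module. -/
def RaisesDegree (u : Fin 4 → A) (P : ℤ → ℤ → Submodule B M) : Prop :=
  ∀ (j : Fin 4) (a b : ℤ), ∀ x ∈ P a b, u j • x ∈ P (a + 1) (b + 1)

variable {u : Fin 4 → A} {P : ℤ → ℤ → Submodule B M}

lemma RaisesDegree.pow_smul_mem (hP : RaisesDegree u P) (j : Fin 4) (t : ℕ) {a b : ℤ}
    {x : M} (hx : x ∈ P a b) : u j ^ t • x ∈ P (a + t) (b + t) := by
  induction t with
  | zero => simpa using hx
  | succ t ih =>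
    rw [pow_succ', mul_smul]
    exact mem_piece_of_eq (hP j _ _ _ ih) (by push_cast; ring) (by push_cast; ring)

lemma RaisesDegree.prod_pow_smul_mem (hP : RaisesDegree u P) (J : Finset (Fin 4)) (t : ℕ)
    {a b : ℤ} {x : M} (hx : x ∈ P a b) :
    (∏ j ∈ J, u j) ^ t • x ∈ P (a + t * J.card) (b + t * J.card) := by
  induction J using Finset.induction_on with
  | empty => simpa using hx
  | insert j J hj ih =>
    rw [Finset.prod_insert hj, mul_pow, mul_smul, Finset.card_insert_of_notMem hj]
    exact mem_piece_of_eq (hP.pow_smul_mem j t ih) (by push_cast; ring) (by push_cast; ring)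

end Degree

variable [Algebra B A] [IsScalarTower B A M] [IsScalarTower B A N] (u : Fin 4 → A)

section Differential

variable (t : ℕ) (w : Finset (Fin 4) → M)

lemma cechD_apply (J : Finset (Fin 4)) : cechD (B := B) u t w J =
    ∑ j ∈ J, (cechSign (A := A) J j * u j ^ t) • w (J.erase j) := rfl

lemma cechD_empty : cechD (B := B) u t w ∅ = 0 := by
  rw [cechD_apply, Finset.sum_empty]

lemma cechD_congr {w w' : Finset (Fin 4) → M} {J : Finset (Fin 4)}
    (h : ∀ J' ⊆ J, w J' = w' J') : cechD (B := B) u t w J = cechD (B := B) u t w' J :=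
  Finset.sum_congr rfl fun j _ => by rw [h _ (J.erase_subset j)]

/-- Expansion along the smallest index: the cochain complex on `u₀ᵗ, …, u₃ᵗ` is an iterated mapping
cone. -/
lemma cechD_insert {i : Fin 4} {J : Finset (Fin 4)} (hi : ∀ j ∈ J, i < j) :
    cechD (B := B) u t w (insert i J) =
      u i ^ t • w J - cechD (B := B) u t (fun J' => w (insert i J')) J := by
  have hiJ : i ∉ J := fun h => lt_irrefl i (hi i h)
  have hsign_min : cechSign (A := A) (insert i J) i = 1 := by
    rw [cechSign, Finset.filter_insert, if_neg (lt_irrefl i),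
      Finset.filter_eq_empty_iff.mpr fun j hj => (hi j hj).asymm, Finset.card_empty, pow_zero]
  have hsign : ∀ j ∈ J, cechSign (A := A) (insert i J) j = -cechSign (A := A) J j := fun j hj => by
    rw [cechSign, Finset.filter_insert, if_pos (hi j hj),
      Finset.card_insert_of_notMem fun h => hiJ (Finset.mem_filter.mp h).1, pow_succ, mul_neg_one,
      cechSign]
  rw [cechD_apply, Finset.sum_insert hiJ, hsign_min, one_mul, Finset.erase_insert hiJ, cechD_apply,
    sub_eq_add_neg, ← Finset.sum_neg_distrib]
  refine congrArg _ (Finset.sum_congr rfl fun j hj => ?_)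
  rw [hsign j hj, neg_mul, neg_smul, Finset.erase_insert_of_ne (hi j hj).ne]

lemma cechD_cechD : cechD (B := B) u t (cechD (B := B) u t w) = 0 := by
  funext J
  induction J using Finset.induction_on_min generalizing w with
  | empty => exact cechD_empty u t _
  | insert i J hi ih =>
    have hcone : cechD (B := B) u t (fun J' => cechD (B := B) u t w (insert i J')) J =
        cechD (B := B) u t
          (u i ^ t • w - cechD (B := B) u t (fun J' => w (insert i J'))) J :=
      cechD_congr u t fun J' hJ' => cechD_insert u t w fun j hj => hi j (hJ' hj)
    have hsmul : cechD (B := B) u t (u i ^ t • w) J = u i ^ t • cechD (B := B) u t w J := by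
      simp only [cechD_apply, Finset.smul_sum, Pi.smul_apply, smul_comm (u i ^ t)]
    rw [cechD_insert u t _ hi, hcone, map_sub, Pi.sub_apply, ih, hsmul, Pi.zero_apply, sub_zero,
      Pi.zero_apply, sub_self]

lemma cechD_singleton (i : Fin 4) : cechD (B := B) u t w {i} = u i ^ t • w ∅ := by
  rw [← insert_empty_eq, cechD_insert u t w (by simp), cechD_empty, sub_zero]

lemma cechD_pair {i j : Fin 4} (hij : i < j) :
    cechD (B := B) u t w {i, j} = u i ^ t • w {j} - u j ^ t • w {i} := by
  rw [cechD_insert u t w (by simpa using hij), cechD_singleton, insert_empty_eq]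

lemma cechD_triple {i j l : Fin 4} (hij : i < j) (hjl : j < l) :
    cechD (B := B) u t w {i, j, l} =
      u i ^ t • w {j, l} - (u j ^ t • w {i, l} - u l ^ t • w {i, j}) := by
  rw [cechD_insert u t w (by simpa using ⟨hij, hij.trans hjl⟩), cechD_pair _ _ _ hjl]

lemma cechD_univ :
    cechD (B := B) u t w Finset.univ = u 0 ^ t • w {1, 2, 3} -
      (u 1 ^ t • w {0, 2, 3} - (u 2 ^ t • w {0, 1, 3} - u 3 ^ t • w {0, 1, 2})) := by
  rw [show (Finset.univ : Finset (Fin 4)) = {0, 1, 2, 3} from rfl,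
    cechD_insert u t w (by decide), cechD_triple _ _ _ (by decide) (by decide)]

variable {u t w} in
lemma pow_smul_singleton_comm_of_cechD_eq_zero (h : cechD (B := B) u t w = 0)
    {i j : Fin 4} (hij : i < j) : u i ^ t • w {j} = u j ^ t • w {i} := by
  rw [← sub_eq_zero, ← cechD_pair (B := B) u t w hij, h, Pi.zero_apply]

lemma cechD_comp (φ : M →ₗ[A] N) :
    cechD (B := B) u t (φ ∘ w) = φ ∘ cechD (B := B) u t w := by
  funext J
  simp only [cechD_apply, Function.comp_apply, map_sum, map_smul]

end Differential

section Transition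

lemma cechTr_apply (a : ℕ) (w : Finset (Fin 4) → M) (J : Finset (Fin 4)) :
    cechTr (B := B) u a w J = (∏ j ∈ J, u j) ^ a • w J := rfl

lemma cechTr_cechTr (a b : ℕ) (w : Finset (Fin 4) → M) :
    cechTr (B := B) u a (cechTr (B := B) u b w) = cechTr (B := B) u (b + a) w := by
  funext J
  rw [cechTr_apply, cechTr_apply, cechTr_apply, smul_smul, ← pow_add, add_comm]

lemma cechTr_zero (w : Finset (Fin 4) → M) : cechTr (B := B) u 0 w = w := by
  funext J
  rw [cechTr_apply, pow_zero, one_smul]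

lemma cechTr_single_empty (a : ℕ) (x : M) :
    cechTr (B := B) u a (Pi.single ∅ x) = Pi.single ∅ x := by
  funext J
  rcases eq_or_ne J ∅ with rfl | h
  · rw [cechTr_apply, Finset.prod_empty, one_pow, one_smul]
  · rw [cechTr_apply, Pi.single_eq_of_ne h, smul_zero]

lemma cechTr_comp (φ : M →ₗ[A] N) (a : ℕ) (w : Finset (Fin 4) → M) :
    cechTr (B := B) u a (φ ∘ w) = φ ∘ cechTr (B := B) u a w := by
  funext J
  simp only [cechTr_apply, Function.comp_apply, map_smul]

end Transition

section Bigraded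

variable {u} {P : ℤ → ℤ → Submodule B M}

lemma RaisesDegree.trComp (hP : RaisesDegree u P) : TrComp u P := by
  intro a t i μ ν w hw J
  refine ⟨fun h => ?_, fun h => ?_⟩
  · refine mem_piece_of_eq (hP.prod_pow_smul_mem J a ((hw J).1 h)) ?_ ?_ <;>
      rw [h] <;> push_cast <;> ring
  · rw [cechTr_apply, (hw J).2 h, smul_zero]

lemma RaisesDegree.cechD_mem_cechC (hP : RaisesDegree u P) {t i : ℕ} {μ ν : ℤ}
    {w : Finset (Fin 4) → M} (hw : w ∈ cechC P t i μ ν) :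
    cechD (B := B) u t w ∈ cechC P t (i + 1) μ ν := by
  intro J
  rw [cechD_apply]
  refine ⟨fun h => sum_mem fun j hj => ?_, fun h => Finset.sum_eq_zero fun j hj => ?_⟩
  · have hcard : (J.erase j).card = i := by rw [Finset.card_erase_of_mem hj, h, Nat.add_sub_cancel]
    have hmem : u j ^ t • w (J.erase j) ∈ P (μ + t * (i + 1 : ℕ)) (ν + t * (i + 1 : ℕ)) :=
      mem_piece_of_eq (hP.pow_smul_mem j t ((hw (J.erase j)).1 hcard)) (by push_cast; ring)
        (by push_cast; ring)
    rw [mul_smul, cechSign]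
    rcases neg_one_pow_eq_or A (J.filter (· < j)).card with hs | hs
    · rwa [hs, one_smul]
    · rw [hs, neg_one_smul]
      exact neg_mem hmem
  · rw [(hw (J.erase j)).2 fun hc => h (by rw [← hc, Finset.card_erase_add_one hj]), smul_zero]

end Bigraded

section Functoriality

variable {u} {P : ℤ → ℤ → Submodule B M} {Q : ℤ → ℤ → Submodule B N} {t i : ℕ} {μ ν : ℤ}

lemma comp_mem_cocyc (φ : M →ₗ[A] N) (hφ : ∀ a b, ∀ x ∈ P a b, φ x ∈ Q a b)
    {w : Finset (Fin 4) → M} (hw : w ∈ cocyc u P t i μ ν) : φ ∘ w ∈ cocyc u Q t i μ ν := by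
  refine ⟨comp_mem_cechC φ hφ hw.1, LinearMap.mem_ker.mpr ?_⟩
  rw [cechD_comp, LinearMap.mem_ker.mp hw.2]
  exact funext fun _ => map_zero φ

lemma comp_mem_cobd (φ : M →ₗ[A] N) (hφ : ∀ a b, ∀ x ∈ P a b, φ x ∈ Q a b)
    {w : Finset (Fin 4) → M} (hw : w ∈ cobd u P t i μ ν) : φ ∘ w ∈ cobd u Q t i μ ν := by
  cases i with
  | zero =>
    rw [cobd, Submodule.mem_bot] at hw ⊢
    rw [hw]
    exact funext fun _ => map_zero φ
  | succ i =>
    obtain ⟨v, hv, rfl⟩ := hw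
    exact ⟨φ ∘ v, comp_mem_cechC φ hφ hv, cechD_comp u t v φ⟩

lemma LCvanish_of_retract (ι : M →ₗ[A] N) (π : N →ₗ[A] M) (hι : ∀ a b, ∀ x ∈ P a b, ι x ∈ Q a b)
    (hπ : ∀ a b, ∀ x ∈ Q a b, π x ∈ P a b) (hπι : ∀ a b, ∀ x ∈ P a b, π (ι x) = x)
    (h : LCvanish (B := B) u Q i μ ν) : LCvanish (B := B) u P i μ ν := by
  intro t w hw
  obtain ⟨a, ha⟩ := h t _ (comp_mem_cocyc ι hι hw)
  have hw' : π ∘ ι ∘ w = w :=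
    eq_of_mem_cechC (comp_mem_cechC π hπ (comp_mem_cechC ι hι hw.1)) hw.1 fun J hJ =>
      hπι _ _ _ ((hw.1 J).1 hJ)
  refine ⟨a, ?_⟩
  have hmem := comp_mem_cobd π hπ ha
  rwa [← cechTr_comp, hw'] at hmem

end Functoriality

end Cech

section LocalCohomologyClass

variable {B A M : Type} [CommRing B] [CommRing A] [Algebra B A] [AddCommGroup M] [Module A M]
  [Module B M] [IsScalarTower B A M] {u : Fin 4 → A} {P : ℤ → ℤ → Submodule B M} {t i : ℕ}
  {μ ν : ℤ}

variable (u P t i μ ν) in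
/-- The cohomology class, at level `t`, of a cocycle of level `t`. -/
def cohMk : cocyc u P t i μ ν →ₗ[B] cohPiece u P t i μ ν :=
  (Submodule.comap (cocyc u P t i μ ν).subtype (cobd u P t i μ ν)).mkQ

lemma cohMk_surjective : Function.Surjective (cohMk u P t i μ ν) :=
  Submodule.mkQ_surjective _

lemma cohMk_eq_zero_iff (w : cocyc u P t i μ ν) :
    cohMk u P t i μ ν w = 0 ↔ w.1 ∈ cobd u P t i μ ν :=
  Submodule.Quotient.mk_eq_zero _

lemma cechTr_sub_mem_cocyc (hc : TrComp u P) {t' : ℕ} (h : t ≤ t') {w : Finset (Fin 4) → M}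
    (hw : w ∈ cocyc u P t i μ ν) : cechTr (B := B) u (t' - t) w ∈ cocyc u P t' i μ ν := by
  have hmem := tr_cocyc u P hc (a := t' - t) hw
  rwa [Nat.add_sub_cancel' h] at hmem

lemma cohTrans_cohMk (hc : TrComp u P) {t' : ℕ} (h : t ≤ t') (w : cocyc u P t i μ ν) :
    cohTrans u P hc i μ ν h (cohMk u P t i μ ν w) =
      cohMk u P t' i μ ν ⟨_, cechTr_sub_mem_cocyc hc h w.2⟩ :=
  Submodule.mapQ_apply _ _ _ _

instance (hc : TrComp u P) : DirectedSystem (fun t => cohPiece u P t i μ ν)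
    (fun _ _ h => cohTrans u P hc i μ ν h) where
  map_self t x := by
    obtain ⟨w, rfl⟩ := cohMk_surjective x
    rw [cohTrans_cohMk]
    refine congrArg _ (Subtype.ext ?_)
    simp only [Nat.sub_self, cechTr_zero]
  map_map t₃ t₂ t₁ h₁₂ h₂₃ x := by
    obtain ⟨w, rfl⟩ := cohMk_surjective x
    rw [cohTrans_cohMk, cohTrans_cohMk, cohTrans_cohMk]
    refine congrArg _ (Subtype.ext ?_)
    simp only [cechTr_cechTr, add_comm (t₂ - t₁), Nat.sub_add_sub_cancel h₂₃ h₁₂]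

/-- The canonical map from the cohomology at level `t` to local cohomology. -/
def LCof (hc : TrComp u P) (t i : ℕ) (μ ν : ℤ) : cohPiece u P t i μ ν →ₗ[B] LCH u P hc i μ ν :=
  Module.DirectLimit.of B ℕ (fun t => cohPiece u P t i μ ν)
    (fun _ _ h => cohTrans u P hc i μ ν h) t

/-- The class in local cohomology of a cocycle of level `t`. -/
def LCclass (hc : TrComp u P) (t i : ℕ) (μ ν : ℤ) :
    cocyc u P t i μ ν →ₗ[B] LCH u P hc i μ ν :=
  LCof hc t i μ ν ∘ₗ cohMk u P t i μ ν

variable (hc : TrComp u P)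

lemma exists_LCclass_eq (c : LCH u P hc i μ ν) : ∃ t w, LCclass hc t i μ ν w = c := by
  obtain ⟨t, x, hx⟩ := Module.DirectLimit.exists_of (G := fun t => cohPiece u P t i μ ν) c
  obtain ⟨w, rfl⟩ := cohMk_surjective x
  exact ⟨t, w, hx⟩

lemma LCclass_cechTr (a : ℕ) (w : cocyc u P t i μ ν) :
    LCclass hc (t + a) i μ ν ⟨_, tr_cocyc u P hc (a := a) w.2⟩ = LCclass hc t i μ ν w := by
  have htr := cohTrans_cohMk hc (Nat.le_add_right t a) w
  simp only [Nat.add_sub_cancel_left] at htr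
  rw [LCclass, LinearMap.comp_apply, ← htr]
  exact Module.DirectLimit.of_f

lemma LCclass_eq_zero_iff (w : cocyc u P t i μ ν) :
    LCclass hc t i μ ν w = 0 ↔
      ∃ a, cechTr (B := B) u a w.1 ∈ cobd u P (t + a) i μ ν := by
  constructor
  · intro h
    obtain ⟨t', ht, h0⟩ := Module.DirectLimit.of.zero_exact
      (G := fun t => cohPiece u P t i μ ν) h
    obtain ⟨a, rfl⟩ := Nat.exists_eq_add_of_le ht
    rw [cohTrans_cohMk, cohMk_eq_zero_iff] at h0
    exact ⟨a, by simpa only [Nat.add_sub_cancel_left] using h0⟩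
  · rintro ⟨a, ha⟩
    rw [← LCclass_cechTr hc a w, LCclass, LinearMap.comp_apply, (cohMk_eq_zero_iff _).mpr ha,
      map_zero]

end LocalCohomologyClass

section TopCohomology

variable {σ k : Type} [Field k]

lemma monomial_mem_of_forall_monomial_mem {g : MvPolynomial σ k} {I : Ideal (MvPolynomial σ k)}
    (hg : g ∈ I) {α δ : σ →₀ ℕ} (hα : α ∈ g.support) (hαδ : α ≤ δ)
    (h : ∀ β ∈ g.support, β ≠ α → monomial (δ - α + β) 1 ∈ I) : monomial δ 1 ∈ I := by
  classical
  have hmul : monomial (δ - α) 1 * g =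
      C (coeff α g) * monomial δ 1 +
        ∑ β ∈ g.support.erase α, C (coeff β g) * monomial (δ - α + β) 1 := by
    conv_lhs => rw [g.as_sum, Finset.mul_sum, ← Finset.add_sum_erase _ _ hα]
    simp only [monomial_mul, C_mul_monomial, one_mul, mul_one, tsub_add_cancel_of_le hαδ]
  have hlead : C (coeff α g) * monomial δ 1 ∈ I := by
    rw [eq_sub_of_add_eq hmul.symm]
    refine I.sub_mem (I.mul_mem_left _ hg) (I.sum_mem fun β hβ => I.mul_mem_left _ ?_)
    exact h β (Finset.mem_of_mem_erase hβ) (Finset.ne_of_mem_erase hβ)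
  have hunit := I.mul_mem_left (C (coeff α g)⁻¹) hlead
  rwa [← mul_assoc, ← C_mul, inv_mul_cancel₀ (mem_support_iff.mp hα), C_1, one_mul] at hunit

lemma monomial_mem_of_X_pow_mem {I : Ideal (MvPolynomial σ k)} {i : σ} {T : ℕ}
    (hI : X i ^ T ∈ I) {δ : σ →₀ ℕ} (hδ : T ≤ δ i) : monomial δ 1 ∈ I := by
  refine I.mem_of_dvd ?_ hI
  rw [X_pow_eq_monomial, monomial_dvd_monomial]
  exact ⟨Or.inr (Finsupp.single_le_iff.mpr hδ), dvd_rfl⟩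

lemma toSyn_add_tsub_lt (o : MonomialOrder σ) {α β γ : σ →₀ ℕ} (h : o.toSyn α < o.toSyn β)
    (hle : β ≤ γ + α) : o.toSyn (γ + α - β) < o.toSyn γ := by
  refine lt_of_add_lt_add_right (a := o.toSyn α) ?_
  calc o.toSyn (γ + α - β) + o.toSyn α < o.toSyn (γ + α - β) + o.toSyn β := by gcongr
    _ = o.toSyn γ + o.toSyn α := by rw [← map_add, ← map_add, tsub_add_cancel_of_le hle]

variable [LinearOrder σ] {g : MvPolynomial σ k}

/-- With `T = δ + γ`, the monomial `x^δ` stands for the element `x^{-γ}` of the top local cohomology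
of the polynomial ring, on which `g` therefore acts surjectively: dividing by the least term of `g`
replaces `γ` by smaller exponents. -/
lemma eventually_monomial_mem_span_insert [Finite σ] (hg : g ≠ 0) (γ : σ →₀ ℕ) :
    ∀ᶠ T in Filter.atTop, ∀ δ : σ →₀ ℕ, (∀ i, δ i + γ i = T) →
      monomial δ 1 ∈ Ideal.span (insert g (Set.range fun i => X i ^ T)) := by
  let o : MonomialOrder σ := MonomialOrder.lex
  obtain ⟨α, hα, hmin⟩ := g.support.exists_min_image o.toSyn (support_nonempty.mpr hg)
  induction hs : o.toSyn γ using WellFoundedLT.induction generalizing γ with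
  | ind s ih =>
  subst hs
  have hsmaller : ∀ᶠ T in Filter.atTop, ∀ β ∈ g.support, β ≠ α → β ≤ γ + α →
      ∀ δ : σ →₀ ℕ, (∀ i, δ i + (γ + α - β) i = T) →
        monomial δ 1 ∈ Ideal.span (insert g (Set.range fun i => X i ^ T)) := by
    refine (Filter.eventually_all_finset _).mpr fun β hβ => ?_
    by_cases h : β ≠ α ∧ β ≤ γ + α
    · have hlt : o.toSyn α < o.toSyn β :=
        lt_of_le_of_ne (hmin β hβ) fun e => h.1 (o.toSyn.injective e).symm
      filter_upwards [ih _ (toSyn_add_tsub_lt o hlt h.2) _ rfl] with T hT _ _ using hT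
    · exact Filter.Eventually.of_forall fun T hne hle => absurd ⟨hne, hle⟩ h
  filter_upwards [hsmaller, Filter.eventually_all.mpr fun i =>
    Filter.eventually_ge_atTop (γ i + α i)] with T hT hγα δ hδ
  have hαδ : α ≤ δ := fun i => by have := hγα i; have := hδ i; omega
  refine monomial_mem_of_forall_monomial_mem (Ideal.subset_span (Set.mem_insert _ _)) hα hαδ
    fun β hβ hne => ?_
  by_cases hle : β ≤ γ + α
  · refine hT β hβ hne hle _ fun i => ?_
    have := hγα i
    have := hδ i
    have := hle i
    simp only [Finsupp.add_apply, Finsupp.tsub_apply] at this ⊢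
    omega
  · obtain ⟨i, hi⟩ := not_forall.mp hle
    refine monomial_mem_of_X_pow_mem
      (Ideal.subset_span (Set.mem_insert_of_mem _ (Set.mem_range_self i))) ?_
    have := hγα i
    have := hδ i
    simp only [Finsupp.add_apply, Finsupp.tsub_apply] at hi ⊢
    omega

lemma exists_prod_X_pow_eq [Fintype σ] (hg : g ≠ 0) (N : ℕ) :
    ∃ (a : ℕ) (q : MvPolynomial σ k) (h : σ → MvPolynomial σ k),
      (∏ i, X i) ^ a = q * g + ∑ i, h i * X i ^ (N + a) := by
  obtain ⟨a, ha⟩ := Filter.eventually_atTop.mp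
    (eventually_monomial_mem_span_insert hg (Finsupp.equivFunOnFinite.symm fun _ => N))
  have hmem := ha (N + a) (Nat.le_add_left _ _) (Finsupp.equivFunOnFinite.symm fun _ => a)
    fun _ => add_comm a N
  obtain ⟨q, z, hz, hqz⟩ := Ideal.mem_span_insert.mp hmem
  obtain ⟨h, hh⟩ := Ideal.mem_span_range_iff_exists_fun.mp hz
  refine ⟨a, q, h, ?_⟩
  rw [hh, ← hqz, monomial_eq, C_1, one_mul, Finsupp.prod_fintype _ _ fun _ => pow_zero _,
    ← Finset.prod_pow]
  rfl

end TopCohomology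

section WeightedHomogeneous

variable {σ k Γ : Type} [Field k] [AddCommGroup Γ] {w : σ → Γ} {g x : MvPolynomial σ k} {c d : Γ}

lemma weightedHomogeneousComponent_mul_of_mem (hg : IsWeightedHomogeneous w g d)
    (x : MvPolynomial σ k) (c : Γ) :
    weightedHomogeneousComponent w (c + d) (x * g) = weightedHomogeneousComponent w c x * g := by
  classical
  let := weightedGradedAlgebra k w
  have hcomp : ∀ (y : MvPolynomial σ k) (e : Γ),
      (DirectSum.decompose (weightedHomogeneousSubmodule k w) y e : MvPolynomial σ k) =
        weightedHomogeneousComponent w e y := weightedDecomposition.decompose'_apply k w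
  rw [← hcomp, ← hcomp]
  exact DirectSum.coe_decompose_mul_add_of_right_mem _ hg

lemma isWeightedHomogeneous_of_mul_right (hg : IsWeightedHomogeneous w g d) (hg0 : g ≠ 0)
    (h : IsWeightedHomogeneous w (x * g) (c + d)) : IsWeightedHomogeneous w x c := by
  have hcomp := weightedHomogeneousComponent_mul_of_mem hg x c
  rw [weightedHomogeneousComponent_eq_self h] at hcomp
  rw [mul_right_cancel₀ hg0 hcomp]
  exact weightedHomogeneousComponent_mem _ _ _

lemma exists_prod_X_pow_eq_of_isWeightedHomogeneous [Fintype σ] [LinearOrder σ]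
    (hg : IsWeightedHomogeneous w g d) (hg0 : g ≠ 0) (N : ℕ) :
    ∃ (a : ℕ) (q : MvPolynomial σ k) (h : σ → MvPolynomial σ k),
      IsWeightedHomogeneous w q (a • ∑ i, w i - d) ∧
      (∀ i, IsWeightedHomogeneous w (h i) (a • ∑ i, w i - (N + a) • w i)) ∧
      (∏ i, X i) ^ a = q * g + ∑ i, h i * X i ^ (N + a) := by
  obtain ⟨a, q, h, e⟩ := exists_prod_X_pow_eq hg0 N
  refine ⟨a, weightedHomogeneousComponent w _ q, fun i => weightedHomogeneousComponent w _ (h i),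
    weightedHomogeneousComponent_mem _ _ _,
    fun i => weightedHomogeneousComponent_mem _ _ _, ?_⟩
  have hprod : IsWeightedHomogeneous w ((∏ i, X i) ^ a : MvPolynomial σ k) (a • ∑ i, w i) :=
    (IsWeightedHomogeneous.prod _ _ _ fun i _ => isWeightedHomogeneous_X k w i).pow a
  have hX : ∀ i, IsWeightedHomogeneous w (X i ^ (N + a) : MvPolynomial σ k) ((N + a) • w i) :=
    fun i => (isWeightedHomogeneous_X k w i).pow _
  simp only [← weightedHomogeneousComponent_mul_of_mem hg,
    ← weightedHomogeneousComponent_mul_of_mem (hX _), sub_add_cancel]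
  rw [← map_sum, ← map_add, ← e, weightedHomogeneousComponent_eq_self hprod]

end WeightedHomogeneous

section Grading

variable {k : Type} [Field k] {M : Type} [AddCommGroup M] [Module k M] [Module (RR k) M]

lemma Rpiece_mul {a b c d : ℤ} {x y : RR k} (hx : x ∈ Rpiece k a b) (hy : y ∈ Rpiece k c d) :
    x * y ∈ Rpiece k (a + c) (b + d) :=
  IsWeightedHomogeneous.mul hx hy

lemma Rpiece_pow {a b : ℤ} {x : RR k} (hx : x ∈ Rpiece k a b) (t : ℕ) :
    x ^ t ∈ Rpiece k (t * a) (t * b) := by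
  have h : IsWeightedHomogeneous stw (x ^ t) (t • (a, b)) := IsWeightedHomogeneous.pow hx t
  rwa [Prod.smul_mk, nsmul_eq_mul, nsmul_eq_mul] at h

lemma X_mem_Rpiece (i : Fin 4) : (X i : RR k) ∈ Rpiece k (stw i).1 (stw i).2 :=
  isWeightedHomogeneous_X k stw i

lemma uR_mem_Rpiece (j : Fin 4) : uR k j ∈ Rpiece k 1 1 := by
  fin_cases j <;> exact Rpiece_mul (X_mem_Rpiece (k := k) _) (X_mem_Rpiece _)

lemma prod_X_mem_Rpiece : (∏ i, X i : RR k) ∈ Rpiece k 2 2 :=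
  IsWeightedHomogeneous.prod Finset.univ _ _ fun i _ => isWeightedHomogeneous_X k stw i

lemma mem_Rpiece_of_mul_mem {a b c d : ℤ} {g x : RR k} (hg0 : g ≠ 0) (hg : g ∈ Rpiece k c d)
    (h : x * g ∈ Rpiece k (a + c) (b + d)) : x ∈ Rpiece k a b :=
  isWeightedHomogeneous_of_mul_right (c := (a, b)) hg hg0 h

/-- The pieces `P μ ν` of an `R`-module are compatible with the bigrading of `R`. -/
def IsBigraded (P : ℤ → ℤ → Submodule k M) : Prop :=
  ∀ ⦃a b c d : ℤ⦄ ⦃r : RR k⦄ ⦃x : M⦄, r ∈ Rpiece k a b → x ∈ P c d → r • x ∈ P (a + c) (b + d)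

lemma IsBigraded.raisesDegree {P : ℤ → ℤ → Submodule k M} (hP : IsBigraded P) :
    RaisesDegree (uR k) P := fun j a b _ hx =>
  mem_piece_of_eq (hP (uR_mem_Rpiece j) hx) (add_comm 1 a) (add_comm 1 b)

end Grading

section Fractions

variable {k : Type} [Field k] {M N : Type} [AddCommGroup M] [Module k M] [Module (RR k) M]
  [IsScalarTower k (RR k) M] [AddCommGroup N] [Module k N] [Module (RR k) N]
  [IsScalarTower k (RR k) N]

/-- The numerators `x` of bidegree `(μ + 2N, ν + 2N)` for which the fraction `x / (s₀s₁t₀t₁)^N` is a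
sum of four fractions, each having a denominator that omits one of the variables. -/
def fracSum (P : ℤ → ℤ → Submodule k M) (μ ν : ℤ) (N : ℕ) : Submodule k M :=
  (Submodule.pi Set.univ fun i => P (μ + N * (2 - (stw i).1)) (ν + N * (2 - (stw i).2))).map
    (∑ i, Algebra.lsmul k k M (X i ^ N : RR k) ∘ₗ LinearMap.proj i)

/-- The vanishing of the bidegree-`(μ,ν)` piece of `H⁴_{(s₀,s₁,t₀,t₁)}(M)`, which is also that of
`H³_𝔪(M)`: every fraction `x / (s₀s₁t₀t₁)^N` of bidegree `(μ,ν)` becomes zero. -/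
def FracVanish (P : ℤ → ℤ → Submodule k M) (μ ν : ℤ) : Prop :=
  ∀ N : ℕ, ∀ x ∈ P (μ + 2 * N) (ν + 2 * N),
    ∃ a : ℕ, (∏ i, X i : RR k) ^ a • x ∈ fracSum P μ ν (N + a)

variable {P : ℤ → ℤ → Submodule k M} {Q : ℤ → ℤ → Submodule k N} {μ ν : ℤ} {T : ℕ}

lemma mem_fracSum {x : M} : x ∈ fracSum P μ ν T ↔ ∃ y : Fin 4 → M,
    (∀ i, y i ∈ P (μ + T * (2 - (stw i).1)) (ν + T * (2 - (stw i).2))) ∧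
      ∑ i, (X i : RR k) ^ T • y i = x := by
  simp [fracSum, Submodule.mem_map, -map_pow]

lemma X_pow_smul_mem_fracSum (i : Fin 4) {y : M}
    (hy : y ∈ P (μ + T * (2 - (stw i).1)) (ν + T * (2 - (stw i).2))) :
    (X i : RR k) ^ T • y ∈ fracSum P μ ν T := by
  refine mem_fracSum.mpr ⟨Pi.single i y, fun j => ?_, ?_⟩
  · rcases eq_or_ne j i with rfl | h
    · rwa [Pi.single_eq_same]
    · rw [Pi.single_eq_of_ne h]
      exact zero_mem _
  · simp [Pi.single_apply, smul_ite]

lemma map_mem_fracSum (φ : M →ₗ[RR k] N) (hφ : ∀ a b, ∀ x ∈ P a b, φ x ∈ Q a b) {x : M}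
    (hx : x ∈ fracSum P μ ν T) : φ x ∈ fracSum Q μ ν T := by
  obtain ⟨y, hy, rfl⟩ := mem_fracSum.mp hx
  refine mem_fracSum.mpr ⟨φ ∘ y, fun i => hφ _ _ _ (hy i), ?_⟩
  simp only [map_sum, map_smul, Function.comp_apply]

lemma prod_X_pow_smul_mem_fracSum (hP : IsBigraded P) (a : ℕ) {x : M}
    (hx : x ∈ fracSum P μ ν T) : (∏ i, X i : RR k) ^ a • x ∈ fracSum P μ ν (T + a) := by
  obtain ⟨y, hy, rfl⟩ := mem_fracSum.mp hx
  rw [Finset.smul_sum]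
  refine sum_mem fun i _ => ?_
  have hcof : (∏ j, X j : RR k) = X i * ∏ j ∈ Finset.univ.erase i, X j :=
    (Finset.mul_prod_erase _ _ (Finset.mem_univ i)).symm
  have hcof_mem : (∏ j ∈ Finset.univ.erase i, X j : RR k) ∈
      Rpiece k (2 - (stw i).1) (2 - (stw i).2) := by
    refine mem_Rpiece_of_mul_mem (X_ne_zero i) (X_mem_Rpiece i) ?_
    rw [mul_comm, ← hcof, sub_add_cancel, sub_add_cancel]
    exact prod_X_mem_Rpiece
  rw [smul_smul, hcof, mul_pow, mul_right_comm, ← pow_add, add_comm a, mul_smul]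
  exact X_pow_smul_mem_fracSum i (mem_piece_of_eq (hP (Rpiece_pow hcof_mem a) (hy i))
    (by push_cast; ring) (by push_cast; ring))

end Fractions

section TopCochains

variable {k : Type} [Field k] {M : Type} [AddCommGroup M] [Module (RR k) M]

lemma uR_zero : uR k 0 = X 0 * X 2 := rfl
lemma uR_one : uR k 1 = X 0 * X 3 := rfl
lemma uR_two : uR k 2 = X 1 * X 2 := rfl
lemma uR_three : uR k 3 = X 1 * X 3 := rfl

lemma prod_uR_triple {i j l : Fin 4} (hij : i < j) (hjl : j < l) :
    ∏ x ∈ {i, j, l}, uR k x = uR k i * (uR k j * uR k l) := by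
  rw [Finset.prod_insert (by simp [hij.ne, (hij.trans hjl).ne]), Finset.prod_pair hjl.ne]

/-- The cochain of degree `3` and level `t` that represents the fraction `x / (s₀s₁t₀t₁)^t`. -/
def fracCochain (t : ℕ) (x : M) : Finset (Fin 4) → M :=
  Pi.single {0, 1, 2} (uR k 0 ^ t • x) + Pi.single {0, 1, 3} (uR k 1 ^ t • x)

/-- The numerator, over `(s₀s₁t₀t₁)^(2t)`, of the difference of the fractions
`w₀₁₂ / (u₀u₁u₂)^t` and `w₁₂₃ / (u₁u₂u₃)^t` in the entries of a cochain of degree `3`. -/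
def cochainNumerator (t : ℕ) (w : Finset (Fin 4) → M) : M :=
  uR k 3 ^ t • w {0, 1, 2} - uR k 0 ^ t • w {1, 2, 3}

lemma cochainNumerator_fracCochain (t : ℕ) (x : M) :
    cochainNumerator (k := k) t (fracCochain (k := k) t x) = (∏ i, X i : RR k) ^ t • x := by
  simp +decide only [cochainNumerator, fracCochain, Pi.add_apply, Pi.single_apply, if_true,
    if_false, smul_zero, add_zero, sub_zero, uR_zero, uR_three, Fin.prod_univ_four]
  module

variable [Module k M] {P : ℤ → ℤ → Submodule k M} {μ ν : ℤ} {t : ℕ} {w : Finset (Fin 4) → M}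

lemma cochainNumerator_mem (hP : IsBigraded P) (hw : w ∈ cechC P t 3 μ ν) :
    cochainNumerator (k := k) t w ∈ P (μ + 2 * (2 * t : ℕ)) (ν + 2 * (2 * t : ℕ)) := by
  have hmem : ∀ (j : Fin 4) (J : Finset (Fin 4)), J.card = 3 →
      uR k j ^ t • w J ∈ P (μ + 2 * (2 * t : ℕ)) (ν + 2 * (2 * t : ℕ)) := fun j J hJ =>
    mem_piece_of_eq (hP.raisesDegree.pow_smul_mem j t ((hw J).1 hJ)) (by push_cast; ring)
      (by push_cast; ring)
  exact sub_mem (hmem 3 _ (by decide)) (hmem 0 _ (by decide))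

/-- A cochain of degree `2` and level `2t` whose coboundary is the image of the cocycle `w` of
level `t`, provided that the numerator of `w` is `∑ i, X i ^ (2t) • y i`. -/
def cochainPrimitive (t : ℕ) (w : Finset (Fin 4) → M) (y : Fin 4 → M) : Finset (Fin 4) → M :=
  Pi.single {0, 1} ((X 0 : RR k) ^ (2 * t) • y 1) -
    Pi.single {0, 2} ((X 2 : RR k) ^ (2 * t) • y 3) -
    Pi.single {0, 3} ((X 0 : RR k) ^ (2 * t) • y 0 + (X 3 : RR k) ^ (2 * t) • y 3 +
      uR k 1 ^ t • w {0, 2, 3}) +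
    Pi.single {1, 2} ((X 0 : RR k) ^ (2 * t) • y 0 + (X 2 : RR k) ^ (2 * t) • y 2 +
      uR k 0 ^ t • w {1, 2, 3}) +
    Pi.single {1, 3} ((X 3 : RR k) ^ (2 * t) • y 2) -
    Pi.single {2, 3} ((X 1 : RR k) ^ (2 * t) • y 0)

lemma cochainPrimitive_mem (hP : IsBigraded P) (hw : w ∈ cechC P t 3 μ ν) {y : Fin 4 → M}
    (hy : ∀ i, y i ∈ P (μ + (2 * t : ℕ) * (2 - (stw i).1)) (ν + (2 * t : ℕ) * (2 - (stw i).2))) :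
    cochainPrimitive (k := k) t w y ∈ cechC P (2 * t) 2 μ ν := by
  have hXy : ∀ i j, stw i = stw j →
      (X i : RR k) ^ (2 * t) • y j ∈ P (μ + (2 * t : ℕ) * (2 : ℕ)) (ν + (2 * t : ℕ) * (2 : ℕ)) :=
    fun i j hij => mem_piece_of_eq (hP (Rpiece_pow (X_mem_Rpiece i) _) (hy j))
      (by rw [hij]; push_cast; ring) (by rw [hij]; push_cast; ring)
  have huw : ∀ (j : Fin 4) (J : Finset (Fin 4)), J.card = 3 →
      uR k j ^ t • w J ∈ P (μ + (2 * t : ℕ) * (2 : ℕ)) (ν + (2 * t : ℕ) * (2 : ℕ)) := fun j J hJ =>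
    mem_piece_of_eq (hP.raisesDegree.pow_smul_mem j t ((hw J).1 hJ)) (by push_cast; ring)
      (by push_cast; ring)
  refine sub_mem (add_mem (add_mem (sub_mem (sub_mem ?_ ?_) ?_) ?_) ?_) ?_ <;>
    refine single_mem_cechC (by decide) ?_
  · exact hXy 0 1 rfl
  · exact hXy 2 3 rfl
  · exact add_mem (add_mem (hXy 0 0 rfl) (hXy 3 3 rfl)) (huw 1 _ rfl)
  · exact add_mem (add_mem (hXy 0 0 rfl) (hXy 2 2 rfl)) (huw 0 _ rfl)
  · exact hXy 3 2 rfl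
  · exact hXy 1 0 rfl

variable [IsScalarTower k (RR k) M]

lemma cochainNumerator_cechTr (a t : ℕ) (w : Finset (Fin 4) → M) :
    cochainNumerator (k := k) (t + a) (cechTr (B := k) (uR k) a w) =
      (∏ i, X i : RR k) ^ (2 * a) • cochainNumerator (k := k) t w := by
  simp only [cochainNumerator, cechTr_apply, Fin.prod_univ_four,
    prod_uR_triple (k := k) (show (0 : Fin 4) < 1 by decide) (show (1 : Fin 4) < 2 by decide),
    prod_uR_triple (k := k) (show (1 : Fin 4) < 2 by decide) (show (2 : Fin 4) < 3 by decide),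
    uR_zero, uR_one, uR_two, uR_three]
  module

lemma fracCochain_mem_cocyc (hP : IsBigraded P) {x : M} (hx : x ∈ P (μ + 2 * t) (ν + 2 * t)) :
    fracCochain (k := k) t x ∈ cocyc (uR k) P t 3 μ ν := by
  have hux : ∀ j, uR k j ^ t • x ∈ P (μ + t * (3 : ℕ)) (ν + t * (3 : ℕ)) := fun j =>
    mem_piece_of_eq (hP.raisesDegree.pow_smul_mem j t hx) (by push_cast; ring) (by push_cast; ring)
  have hw : fracCochain (k := k) t x ∈ cechC P t 3 μ ν :=
    add_mem (single_mem_cechC (by decide) (hux 0)) (single_mem_cechC (by decide) (hux 1))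
  refine ⟨hw, LinearMap.mem_ker.mpr (funext fun J => ?_)⟩
  by_cases hJ : J.card = 4
  · obtain rfl : J = Finset.univ := Finset.eq_univ_of_card J hJ
    rw [cechD_univ]
    simp +decide only [fracCochain, Pi.add_apply, Pi.single_apply, if_true, if_false, smul_zero,
      zero_add, add_zero, zero_sub, sub_neg_eq_add, Pi.zero_apply, uR_zero, uR_one, uR_two,
      uR_three]
    module
  · exact (hP.raisesDegree.cechD_mem_cechC hw J).2 hJ

lemma cochainNumerator_mem_fracSum (hP : IsBigraded P) (hw : w ∈ cobd (uR k) P t 3 μ ν) :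
    cochainNumerator (k := k) t w ∈ fracSum P μ ν (2 * t) := by
  obtain ⟨v, hv, rfl⟩ := hw
  have hnum : cochainNumerator (k := k) t (cechD (B := k) (uR k) t v) =
      (X 1 : RR k) ^ (2 * t) • (X 2 * X 3 : RR k) ^ t • v {0, 1} +
        (X 2 : RR k) ^ (2 * t) • (X 0 * X 1 : RR k) ^ t • v {1, 3} -
        ((X 0 : RR k) ^ (2 * t) • (X 2 * X 3 : RR k) ^ t • v {2, 3} +
          (X 3 : RR k) ^ (2 * t) • (X 0 * X 1 : RR k) ^ t • v {0, 2}) := by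
    rw [cochainNumerator, cechD_triple _ _ _ (by decide) (by decide),
      cechD_triple _ _ _ (by decide) (by decide)]
    simp only [uR_zero, uR_one, uR_two, uR_three]
    module
  have hmem : ∀ (i j l : Fin 4) (J : Finset (Fin 4)), J.card = 2 →
      stw j + stw l = (2, 2) - 2 • stw i →
      (X i : RR k) ^ (2 * t) • (X j * X l : RR k) ^ t • v J ∈ fracSum P μ ν (2 * t) := by
    intro i j l J hJ h
    have h₁ : (stw j).1 + (stw l).1 = 2 - 2 * (stw i).1 := by simpa using congrArg Prod.fst h
    have h₂ : (stw j).2 + (stw l).2 = 2 - 2 * (stw i).2 := by simpa using congrArg Prod.snd h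
    refine X_pow_smul_mem_fracSum i (mem_piece_of_eq (hP (Rpiece_pow (Rpiece_mul
      (X_mem_Rpiece j) (X_mem_Rpiece l)) t) ((hv J).1 hJ)) ?_ ?_)
    · push_cast
      linear_combination (t : ℤ) * h₁
    · push_cast
      linear_combination (t : ℤ) * h₂
  rw [hnum]
  exact sub_mem (add_mem (hmem 1 2 3 _ rfl rfl) (hmem 2 0 1 _ rfl rfl))
    (add_mem (hmem 0 2 3 _ rfl rfl) (hmem 3 0 1 _ rfl rfl))

lemma LCvanish.fracVanish (hP : IsBigraded P) (h : LCvanish (uR k) P 3 μ ν) :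
    FracVanish P μ ν := by
  intro t x hx
  obtain ⟨a, ha⟩ := h t _ (fracCochain_mem_cocyc hP hx)
  have hmem := cochainNumerator_mem_fracSum hP ha
  rw [cochainNumerator_cechTr, cochainNumerator_fracCochain, smul_smul, ← pow_add] at hmem
  exact ⟨2 * a + t, by rwa [show t + (2 * a + t) = 2 * (t + a) by ring]⟩

lemma cechTr_eq_cechD_cochainPrimitive (hP : IsBigraded P) (hw : w ∈ cocyc (uR k) P t 3 μ ν)
    {y : Fin 4 → M}
    (hy : ∀ i, y i ∈ P (μ + (2 * t : ℕ) * (2 - (stw i).1)) (ν + (2 * t : ℕ) * (2 - (stw i).2)))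
    (hwy : ∑ i, (X i : RR k) ^ (2 * t) • y i = cochainNumerator (k := k) t w) :
    cechTr (B := k) (uR k) t w =
      cechD (B := k) (uR k) (2 * t) (cochainPrimitive (k := k) t w y) := by
  have hcocycle : cechD (B := k) (uR k) t w Finset.univ = 0 := congrFun hw.2 _
  have hv := hP.raisesDegree.cechD_mem_cechC (cochainPrimitive_mem hP hw.1 hy)
  have htr := hP.raisesDegree.trComp t t 3 μ ν w hw.1
  rw [← two_mul] at htr
  refine eq_of_mem_cechC htr hv fun J hJ => ?_
  rw [cechD_univ] at hcocycle
  obtain rfl | rfl | rfl | rfl :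
      J = {0, 1, 2} ∨ J = {0, 1, 3} ∨ J = {0, 2, 3} ∨ J = {1, 2, 3} := by
    revert J
    decide
  all_goals
    rw [cechD_triple _ _ _ (by decide) (by decide), cechTr_apply,
      prod_uR_triple (by decide) (by decide)]
    simp +decide only [cochainPrimitive, cochainNumerator, Fin.sum_univ_four, Pi.add_apply,
      Pi.sub_apply, Pi.single_apply, if_true, if_false, zero_add, add_zero, zero_sub, sub_zero,
      uR_zero, uR_one, uR_two, uR_three] at hwy hcocycle ⊢
  · linear_combination (norm := module) -((X 0 * X 2 : RR k) ^ (2 * t)) • hwy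
  · linear_combination (norm := module) -((X 0 * X 3 : RR k) ^ (2 * t)) • hwy +
      ((X 0 * X 3 : RR k) ^ (2 * t)) • hcocycle
  · module
  · module

lemma FracVanish.LCvanish (hP : IsBigraded P) (h : FracVanish P μ ν) :
    LCvanish (uR k) P 3 μ ν := by
  intro t w hw
  obtain ⟨a, ha⟩ := h (2 * t) _ (cochainNumerator_mem hP hw.1)
  have hw' := tr_cocyc (uR k) P hP.raisesDegree.trComp (a := a) hw
  have hnum : cochainNumerator (k := k) (t + a) (cechTr (B := k) (uR k) a w) ∈
      fracSum P μ ν (2 * (t + a)) := by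
    rw [cochainNumerator_cechTr, show 2 * a = a + a by ring, pow_add, mul_smul,
      show 2 * (t + a) = 2 * t + a + a by ring]
    exact prod_X_pow_smul_mem_fracSum hP a ha
  obtain ⟨y, hy, hwy⟩ := mem_fracSum.mp hnum
  refine ⟨a + (t + a), ?_⟩
  rw [← cechTr_cechTr, cechTr_eq_cechD_cochainPrimitive hP hw' hy hwy,
    show t + (a + (t + a)) = 2 * (t + a) by ring]
  exact ⟨_, cochainPrimitive_mem hP hw'.1 hy, rfl⟩

end TopCochains

section Alternating

variable {k : Type} [Field k] {f : Fin 4 → RR k} {p : ℕ}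

/-- The tensor of the values of an alternating form on the standard basis of `R⁴`. -/
def altTensor (ω : (Fin 4 → RR k) [⋀^Fin p]→ₗ[RR k] RR k) : (Fin p → Fin 4) → RR k :=
  fun a => ω fun i => Pi.single (a i) 1

lemma altTensor_mem_AltT (ω : (Fin 4 → RR k) [⋀^Fin p]→ₗ[RR k] RR k) :
    altTensor ω ∈ AltT k p := fun a i j hij =>
  ⟨fun h => ω.map_eq_zero_of_eq _ (by rw [h]) hij,
    ω.map_swap (fun l => Pi.single (a l) 1) hij⟩

lemma exists_altTensor_eq {x : (Fin p → Fin 4) → RR k} (hx : x ∈ AltT k p) :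
    ∃ ω, altTensor ω = x := by
  let φ : MultilinearMap (RR k) (fun _ : Fin p => Fin 4 → RR k) (RR k) :=
    ∑ a, x a • (MultilinearMap.mkPiAlgebra (RR k) (Fin p) (RR k)).compLinearMap
      fun i => LinearMap.proj (a i)
  have hφ : ∀ v, φ v = ∑ a, x a * ∏ i, v i (a i) := fun v => by simp [φ]
  refine ⟨⟨φ, fun v i j hv hij => ?_⟩, funext fun a => ?_⟩
  · change φ v = 0
    rw [hφ]
    refine Finset.sum_involution (fun a _ => a ∘ Equiv.swap i j) (fun a _ => ?_)
      (fun a _ ha h => ha ?_) (fun _ _ => Finset.mem_univ _) (fun a _ => ?_)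
    · have hprod : ∏ l, v l ((a ∘ Equiv.swap i j) l) = ∏ l, v l (a l) := by
        rw [← Equiv.prod_comp (Equiv.swap i j)]
        refine Finset.prod_congr rfl fun l _ => ?_
        rw [Function.comp_apply, Equiv.swap_apply_self]
        rcases eq_or_ne l i with rfl | hi
        · rw [Equiv.swap_apply_left, hv]
        · rcases eq_or_ne l j with rfl | hj
          · rw [Equiv.swap_apply_right, hv]
          · rw [Equiv.swap_apply_of_ne_of_ne hi hj]
      rw [hprod, (hx a i j hij).2]
      ring
    · have hij' := congrFun h j
      rw [Function.comp_apply, Equiv.swap_apply_right] at hij'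
      rw [(hx a i j hij).1 hij', zero_mul]
    · funext l
      simp only [Function.comp_apply, Equiv.swap_apply_self]
  · change φ _ = x a
    rw [hφ, Finset.sum_eq_single a]
    · simp
    · intro b _ hb
      obtain ⟨i, hi⟩ := Function.ne_iff.mp hb
      rw [Finset.prod_eq_zero (Finset.mem_univ i) (Pi.single_eq_of_ne hi 1), mul_zero]
    · exact fun h => absurd (Finset.mem_univ a) h

lemma apply_comp_perm_of_mem_AltT {x : (Fin p → Fin 4) → RR k} (hx : x ∈ AltT k p)
    (a : Fin p → Fin 4) (σ : Equiv.Perm (Fin p)) :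
    x (a ∘ σ) = Equiv.Perm.sign σ • x a := by
  obtain ⟨ω, rfl⟩ := exists_altTensor_eq hx
  exact ω.map_perm (fun i => Pi.single (a i) 1) σ

lemma DK_apply (x : (Fin (p + 1) → Fin 4) → RR k) (a : Fin p → Fin 4) :
    DK k f p x a = ∑ i, x (Fin.cons i a) * f i := rfl

lemma DK_altTensor (ω : (Fin 4 → RR k) [⋀^Fin (p + 1)]→ₗ[RR k] RR k) :
    DK k f p (altTensor ω) = altTensor (ω.curryLeft f) := by
  funext a
  let g : (Fin 4 → RR k) →ₗ[RR k] RR k :=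
    { toFun v := ω.curryLeft v fun i => Pi.single (a i) 1
      map_add' := by simp
      map_smul' := by simp }
  have hg : ∀ i, g (Pi.single i 1) = altTensor ω (Fin.cons i a) := fun i =>
    congrArg ω (funext (Fin.cases rfl fun _ => rfl))
  calc DK k f p (altTensor ω) a = ∑ i, f i • g (Pi.single i 1) := by
        simp only [DK_apply, hg, smul_eq_mul, mul_comm]
    _ = g f := by
        simp only [← map_smul, ← map_sum]
        rw [← pi_eq_sum_univ' f]

lemma DK_mem_AltT {x : (Fin (p + 1) → Fin 4) → RR k} (hx : x ∈ AltT k (p + 1)) :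
    DK k f p x ∈ AltT k p := by
  obtain ⟨ω, rfl⟩ := exists_altTensor_eq hx
  exact DK_altTensor (f := f) ω ▸ altTensor_mem_AltT _

lemma DK_DK {x : (Fin (p + 2) → Fin 4) → RR k} (hx : x ∈ AltT k (p + 2)) :
    DK k f p (DK k f (p + 1) x) = 0 := by
  obtain ⟨ω, rfl⟩ := exists_altTensor_eq hx
  rw [DK_altTensor, DK_altTensor, AlternatingMap.curryLeft_same]
  rfl

/-- The exterior product `e_l ∧ x` of the `l`-th basis vector with the tensor `x`. -/
def wedge (l : Fin 4) (x : (Fin p → Fin 4) → RR k) : (Fin (p + 1) → Fin 4) → RR k := fun a =>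
  ∑ j : Fin (p + 1), (-1) ^ (j : ℕ) • if a j = l then x (j.removeNth a) else 0

lemma wedge_altTensor (l : Fin 4) (ω : (Fin 4 → RR k) [⋀^Fin p]→ₗ[RR k] RR k) :
    wedge l (altTensor ω) = altTensor (AlternatingMap.alternatizeUncurryFin
      ((LinearMap.proj l : (Fin 4 → RR k) →ₗ[RR k] RR k).smulRight ω)) := by
  funext a
  simp only [wedge, altTensor, AlternatingMap.alternatizeUncurryFin_apply,
    LinearMap.smulRight_apply, LinearMap.proj_apply]
  refine Finset.sum_congr rfl fun j _ => congrArg _ ?_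
  split_ifs with h
  · rw [h, Pi.single_eq_same, one_smul]
    rfl
  · rw [Pi.single_eq_of_ne' h, zero_smul, AlternatingMap.zero_apply]

lemma wedge_mem_AltT (l : Fin 4) {x : (Fin p → Fin 4) → RR k} (hx : x ∈ AltT k p) :
    wedge l x ∈ AltT k (p + 1) := by
  obtain ⟨ω, rfl⟩ := exists_altTensor_eq hx
  exact wedge_altTensor l ω ▸ altTensor_mem_AltT _

lemma wedge_zero (l : Fin 4) : wedge l (0 : (Fin p → Fin 4) → RR k) = 0 := by
  funext a
  simp [wedge]

lemma wedge_cons (l i : Fin 4) (x : (Fin (p + 1) → Fin 4) → RR k) (a : Fin (p + 1) → Fin 4) :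
    wedge l x (Fin.cons i a) =
      (if i = l then x a else 0) - wedge l (fun b => x (Fin.cons i b)) a := by
  have hremove : ∀ j : Fin (p + 1),
      j.succ.removeNth (Fin.cons i a : Fin (p + 2) → Fin 4) = Fin.cons i (j.removeNth a) :=
    Fin.cons_comp_succ_succAbove i a
  simp only [wedge, Fin.sum_univ_succ (n := p + 1), Fin.val_zero, pow_zero, one_smul, Fin.cons_zero,
    Fin.cons_succ, hremove, Fin.val_succ, pow_succ, mul_neg, mul_one, neg_smul,
    Finset.sum_neg_distrib, ← sub_eq_add_neg]
  rfl

/-- Contraction with `f` is an antiderivation. -/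
lemma DK_wedge_succ (l : Fin 4) (x : (Fin (p + 1) → Fin 4) → RR k) :
    DK k f (p + 1) (wedge l x) = f l • x - wedge l (DK k f p x) := by
  funext a
  simp only [DK_apply, wedge_cons, sub_mul, Finset.sum_sub_distrib, ite_mul, zero_mul,
    Finset.sum_ite_eq', Finset.mem_univ, if_true, Pi.sub_apply, Pi.smul_apply, smul_eq_mul]
  congr 1
  · exact mul_comm _ _
  · simp only [wedge, Finset.sum_mul, DK_apply]
    rw [Finset.sum_comm]
    refine Finset.sum_congr rfl fun j _ => ?_
    split_ifs
    · simp only [Finset.smul_sum, smul_mul_assoc]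
    · simp

lemma DK_wedge_zero (l : Fin 4) (x : (Fin 0 → Fin 4) → RR k) :
    DK k f 0 (wedge l x) = f l • x := by
  funext a
  simp [DK_apply, wedge, mul_comm]

lemma ZK_le_AltT : ZK k f p ≤ AltT k p := by
  cases p with
  | zero => exact le_rfl
  | succ q => exact inf_le_left

lemma DK_mem_ZK {x : (Fin (p + 1) → Fin 4) → RR k} (hx : x ∈ AltT k (p + 1)) :
    DK k f p x ∈ ZK k f p := by
  cases p with
  | zero => exact DK_mem_AltT hx
  | succ q => exact ⟨DK_mem_AltT hx, DK_DK hx⟩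

lemma DK_wedge_of_mem_ZK (l : Fin 4) {x : (Fin p → Fin 4) → RR k} (hx : x ∈ ZK k f p) :
    DK k f p (wedge l x) = f l • x := by
  cases p with
  | zero => exact DK_wedge_zero l x
  | succ q => rw [DK_wedge_succ, hx.2, wedge_zero, sub_zero]

lemma mem_AltT_of_smul_mem {r : RR k} (hr : r ≠ 0) {x : (Fin p → Fin 4) → RR k}
    (hx : r • x ∈ AltT k p) : x ∈ AltT k p := by
  intro a i j hij
  obtain ⟨h1, h2⟩ := hx a i j hij
  simp only [Pi.smul_apply, smul_eq_mul, mul_eq_zero, hr, false_or] at h1 h2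
  exact ⟨h1, mul_left_cancel₀ hr (by rw [h2, mul_neg])⟩

end Alternating

section KoszulGrading

variable {k : Type} [Field k] {f : Fin 4 → RR k} {m n p : ℕ} {μ ν : ℤ}

lemma mem_KP {x : (Fin p → Fin 4) → RR k} :
    x ∈ KP k m n p μ ν ↔ ∀ a, x a ∈ Rpiece k (μ - p * m) (ν - p * n) := by
  simp [KP, Submodule.mem_iInf]

lemma isBigraded_KP : IsBigraded (KP k m n p) := by
  intro a b c d r x hr hx
  rw [mem_KP] at hx ⊢
  exact fun i => mem_piece_of_eq (Rpiece_mul hr (hx i)) (by ring) (by ring)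

lemma mem_KP_of_smul_mem {a b : ℤ} {r : RR k} (hr0 : r ≠ 0) (hr : r ∈ Rpiece k a b)
    {x : (Fin p → Fin 4) → RR k} (hx : r • x ∈ KP k m n p (μ + a) (ν + b)) :
    x ∈ KP k m n p μ ν := by
  rw [mem_KP] at hx ⊢
  intro i
  have h : x i * r ∈ Rpiece k (μ + a - p * m) (ν + b - p * n) := by
    rw [mul_comm (x i)]
    exact hx i
  exact mem_Rpiece_of_mul_mem hr0 hr (mem_piece_of_eq (P := Rpiece k) h (by ring) (by ring))

lemma DK_mem_KP (hf : ∀ i, f i ∈ Rpiece k m n) {x : (Fin (p + 1) → Fin 4) → RR k}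
    (hx : x ∈ KP k m n (p + 1) μ ν) : DK k f p x ∈ KP k m n p μ ν := by
  rw [mem_KP] at hx ⊢
  exact fun a => sum_mem fun i _ => mem_piece_of_eq (Rpiece_mul (hx _) (hf i))
    (by push_cast; ring) (by push_cast; ring)

lemma wedge_mem_KP (l : Fin 4) {x : (Fin p → Fin 4) → RR k} (hx : x ∈ KP k m n p μ ν) :
    wedge l x ∈ KP k m n (p + 1) (μ + m) (ν + n) := by
  rw [mem_KP] at hx ⊢
  refine fun a => sum_mem fun j _ => zsmul_mem ?_ _
  split_ifs
  · exact mem_piece_of_eq (hx _) (by push_cast; ring) (by push_cast; ring)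
  · exact zero_mem _

/-- The bigraded pieces that a submodule of the `p`-tensors inherits from `KP`. For `S = ZK k f p`
they are `PZ k f m n p`, and for `S = AltT k p` they are the pieces of `K_p = Λ^p R⁴`. -/
def tensorPiece (m n : ℕ) (S : Submodule (RR k) ((Fin p → Fin 4) → RR k)) (μ ν : ℤ) :
    Submodule k S :=
  (KP k m n p μ ν).comap (S.subtype.restrictScalars k)

lemma isBigraded_tensorPiece (S : Submodule (RR k) ((Fin p → Fin 4) → RR k)) :
    IsBigraded (tensorPiece m n S) := fun _ _ _ _ _ _ hr hx =>
  isBigraded_KP hr hx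

lemma isBigraded_PZ : IsBigraded (PZ k f m n p) :=
  isBigraded_tensorPiece (ZK k f p)

variable (k f p) in
/-- The Koszul differential `K_{p+1} → Z_p`. -/
def koszulD : AltT k (p + 1) →ₗ[RR k] ZK k f p :=
  (DK k f p).restrict fun _ => DK_mem_ZK

lemma koszulD_mem_PZ (hf : ∀ i, f i ∈ Rpiece k m n) {x : AltT k (p + 1)}
    (hx : x ∈ tensorPiece m n (AltT k (p + 1)) μ ν) : koszulD k f p x ∈ PZ k f m n p μ ν :=
  DK_mem_KP hf hx

lemma exists_koszulD_eq_of_mem_BK (hf : ∀ i, f i ∈ Rpiece k m n) {z : ZK k f p}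
    (hz : z ∈ PZ k f m n p μ ν) (hB : z.1 ∈ BK k f p) :
    ∃ y ∈ tensorPiece m n (AltT k (p + 1)) μ ν, koszulD k f p y = z := by
  obtain ⟨x, hx, hxz⟩ := hB
  let comp := weightedHomogeneousComponent (R := k) stw
    (μ - (p + 1 : ℕ) * m, ν - (p + 1 : ℕ) * n)
  refine ⟨⟨fun a => comp (x a), fun a i j hij => ⟨fun h => ?_, ?_⟩⟩,
    mem_KP.mpr fun a => weightedHomogeneousComponent_mem _ _ _, Subtype.ext (funext fun a => ?_)⟩
  · exact (congrArg comp ((hx a i j hij).1 h)).trans (map_zero comp)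
  · exact (congrArg comp (hx a i j hij).2).trans (map_neg comp _)
  · have hdeg : (μ - (p : ℤ) * m, ν - (p : ℤ) * n) =
        ((μ - (p + 1 : ℕ) * m, ν - (p + 1 : ℕ) * n) + ((m : ℤ), (n : ℤ))) := by
      ext <;> push_cast <;> simp <;> ring
    have hza : weightedHomogeneousComponent stw (μ - (p : ℤ) * m, ν - (p : ℤ) * n) (z.1 a) =
        z.1 a :=
      weightedHomogeneousComponent_eq_self (mem_KP.mp hz a)
    change ∑ i, comp (x (Fin.cons i a)) * f i = z.1 a
    rw [← hza, hdeg, ← hxz, DK_apply, map_sum]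
    exact Finset.sum_congr rfl fun i _ =>
      (weightedHomogeneousComponent_mul_of_mem (hf i) _ _).symm

end KoszulGrading

section Antisymmetrization

variable {k : Type} [Field k] {m n p i : ℕ} {μ ν : ℤ}

variable (k p) in
/-- The projection onto the alternating tensors that keeps the entries with increasing indices. -/
def antisymmetrize : ((Fin p → Fin 4) → RR k) →ₗ[RR k] ((Fin p → Fin 4) → RR k) :=
  LinearMap.pi fun a => open Classical in if Function.Injective a then
    ((Equiv.Perm.sign (Tuple.sort a) : ℤ) : RR k) • LinearMap.proj (a ∘ Tuple.sort a) else 0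

lemma antisymmetrize_of_injective (x : (Fin p → Fin 4) → RR k) {a : Fin p → Fin 4}
    (ha : Function.Injective a) : antisymmetrize k p x a =
      ((Equiv.Perm.sign (Tuple.sort a) : ℤ) : RR k) * x (a ∘ Tuple.sort a) := by
  simp [antisymmetrize, ha]

lemma antisymmetrize_of_not_injective (x : (Fin p → Fin 4) → RR k) {a : Fin p → Fin 4}
    (ha : ¬ Function.Injective a) : antisymmetrize k p x a = 0 := by
  simp [antisymmetrize, ha]

lemma sort_comp_perm {a : Fin p → Fin 4} (ha : Function.Injective a) (σ : Equiv.Perm (Fin p)) :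
    σ * Tuple.sort (a ∘ σ) = Tuple.sort a :=
  Equiv.ext fun l => ha (congrFun (Tuple.comp_perm_comp_sort_eq_comp_sort (f := a) (σ := σ)) l)

lemma antisymmetrize_mem_AltT (x : (Fin p → Fin 4) → RR k) : antisymmetrize k p x ∈ AltT k p := by
  intro a i j hij
  refine ⟨fun h => antisymmetrize_of_not_injective x fun ha => hij (ha h), ?_⟩
  by_cases ha : Function.Injective a
  · have hsort := sort_comp_perm ha (Equiv.swap i j)
    rw [antisymmetrize_of_injective x (ha.comp (Equiv.injective _)),
      antisymmetrize_of_injective x ha, Tuple.comp_perm_comp_sort_eq_comp_sort, ← hsort,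
      Equiv.Perm.sign_mul, Equiv.Perm.sign_swap hij]
    simp
  · rw [antisymmetrize_of_not_injective x ha, antisymmetrize_of_not_injective x
      fun h => ha ((Equiv.injective_comp (Equiv.swap i j) a).mp h), neg_zero]

lemma antisymmetrize_eq_self {x : (Fin p → Fin 4) → RR k} (hx : x ∈ AltT k p) :
    antisymmetrize k p x = x := by
  funext a
  by_cases ha : Function.Injective a
  · rw [antisymmetrize_of_injective x ha, apply_comp_perm_of_mem_AltT hx, Units.smul_def,
      zsmul_eq_mul, ← mul_assoc, ← Int.cast_mul, ← Units.val_mul, Int.units_mul_self,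
      Units.val_one, Int.cast_one, one_mul]
  · obtain ⟨i, j, h, hij⟩ := Function.not_injective_iff.mp ha
    rw [antisymmetrize_of_not_injective x ha, (hx a i j hij).1 h]

lemma antisymmetrize_mem_KP {x : (Fin p → Fin 4) → RR k} (hx : x ∈ KP k m n p μ ν) :
    antisymmetrize k p x ∈ KP k m n p μ ν := by
  rw [mem_KP] at hx ⊢
  intro a
  by_cases ha : Function.Injective a
  · rw [antisymmetrize_of_injective x ha, ← zsmul_eq_mul]
    exact zsmul_mem (hx _) _
  · rw [antisymmetrize_of_not_injective x ha]
    exact zero_mem _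

lemma LCvanish_tensorPiece_AltT (h : LCvanish (uR k) (KP k m n p) i μ ν) :
    LCvanish (uR k) (tensorPiece m n (AltT k p)) i μ ν :=
  LCvanish_of_retract (AltT k p).subtype
    ((antisymmetrize k p).codRestrict _ antisymmetrize_mem_AltT) (fun _ _ _ hx => hx)
    (fun _ _ _ hx => antisymmetrize_mem_KP hx)
    (fun _ _ x _ => Subtype.ext (antisymmetrize_eq_self x.2)) h

end Antisymmetrization

section TopCohomologyOfCycles

variable {k : Type} [Field k] {f : Fin 4 → RR k} {m n p : ℕ} {μ ν : ℤ}

/-- By the partial contractibility of the Koszul complex, `q f_l x` is the boundary of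
`e_l ∧ (q x)`. -/
lemma exists_mem_fracSum_mul_smul (hf : ∀ i, f i ∈ Rpiece k m n)
    (h : FracVanish (tensorPiece m n (AltT k (p + 1))) μ ν) {N : ℕ} {x : ZK k f p}
    {l : Fin 4} {q : RR k}
    (hx : q • x ∈ PZ k f m n p (μ + 2 * N - m) (ν + 2 * N - n)) :
    ∃ b : ℕ, (∏ i, X i : RR k) ^ b • (q * f l) • x ∈ fracSum (PZ k f m n p) μ ν (N + b) := by
  let y : AltT k (p + 1) := ⟨_, wedge_mem_AltT l (ZK_le_AltT (q • x).2)⟩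
  have hy : y ∈ tensorPiece m n (AltT k (p + 1)) (μ + 2 * N) (ν + 2 * N) :=
    mem_piece_of_eq (P := KP k m n (p + 1)) (wedge_mem_KP l hx) (by ring) (by ring)
  have hDy : koszulD k f p y = (q * f l) • x := by
    rw [mul_comm, mul_smul]
    exact Subtype.ext (DK_wedge_of_mem_ZK l (q • x).2)
  obtain ⟨b, hb⟩ := h N y hy
  have hDb := map_mem_fracSum (koszulD k f p) (fun _ _ _ => koszulD_mem_PZ hf) hb
  rw [map_smul, hDy] at hDb
  exact ⟨b, hDb⟩

lemma fracVanish_PZ (hf : ∀ i, f i ∈ Rpiece k m n) (hf0 : f ≠ 0)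
    (h : FracVanish (tensorPiece m n (AltT k (p + 1))) μ ν) : FracVanish (PZ k f m n p) μ ν := by
  obtain ⟨l, hl⟩ := Function.ne_iff.mp hf0
  intro N x hx
  obtain ⟨a, q, c, hq, hc, hprod⟩ :=
    exists_prod_X_pow_eq_of_isWeightedHomogeneous (hf l) hl N
  have hsum : ∑ i, stw i = (2, 2) := by decide
  rw [hsum] at hq hc
  have hqx : q • x ∈ PZ k f m n p (μ + 2 * (N + a : ℕ) - m) (ν + 2 * (N + a : ℕ) - n) :=
    mem_piece_of_eq (isBigraded_PZ (a := a • 2 - m) (b := a • 2 - n) hq hx)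
      (by push_cast; ring) (by push_cast; ring)
  obtain ⟨b, hb⟩ := exists_mem_fracSum_mul_smul hf h hqx
  refine ⟨a + b, ?_⟩
  rw [pow_add, mul_comm, mul_smul, hprod, add_smul, smul_add, ← add_assoc N]
  refine add_mem hb (prod_X_pow_smul_mem_fracSum isBigraded_PZ b ?_)
  rw [Finset.sum_smul]
  refine sum_mem fun i _ => ?_
  rw [mul_comm, mul_smul]
  refine X_pow_smul_mem_fracSum i (mem_piece_of_eq (isBigraded_PZ
    (a := a • 2 - (N + a : ℕ) • (stw i).1) (b := a • 2 - (N + a : ℕ) • (stw i).2) (hc i) hx) ?_ ?_)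
  all_goals push_cast; ring

lemma LCvanish_PZ_three (hf : ∀ i, f i ∈ Rpiece k m n) (hf0 : f ≠ 0)
    (h : LCvanish (uR k) (KP k m n (p + 1)) 3 μ ν) : LCvanish (uR k) (PZ k f m n p) 3 μ ν :=
  have hK := (LCvanish_tensorPiece_AltT h).fracVanish (isBigraded_tensorPiece _)
  (fracVanish_PZ hf hf0 hK).LCvanish isBigraded_PZ

end TopCohomologyOfCycles

section Graph

variable {R M N : Type} [Ring R] [AddCommGroup M] [Module R M] [AddCommGroup N] [Module R N]

lemma nonempty_linearEquiv_of_graph (G : Submodule R (M × N)) (hx : ∀ x, ∃ y, (x, y) ∈ G)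
    (hy : ∀ y, ∃ x, (x, y) ∈ G) (hx0 : ∀ x, (x, 0) ∈ G → x = 0) (hy0 : ∀ y, (0, y) ∈ G → y = 0) :
    Nonempty (N ≃ₗ[R] M) := by
  have hfst : Function.Bijective (LinearMap.fst R M N ∘ₗ G.subtype) := by
    refine ⟨(injective_iff_map_eq_zero _).mpr ?_, fun x => ?_⟩
    · rintro ⟨⟨x, y⟩, h⟩ (rfl : x = 0)
      exact Subtype.ext (Prod.ext rfl (hy0 y h))
    · obtain ⟨y, h⟩ := hx x
      exact ⟨⟨_, h⟩, rfl⟩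
  have hsnd : Function.Bijective (LinearMap.snd R M N ∘ₗ G.subtype) := by
    refine ⟨(injective_iff_map_eq_zero _).mpr ?_, fun y => ?_⟩
    · rintro ⟨⟨x, y⟩, h⟩ (rfl : y = 0)
      exact Subtype.ext (Prod.ext (hx0 x h) rfl)
    · obtain ⟨x, h⟩ := hy y
      exact ⟨⟨_, h⟩, rfl⟩
  exact ⟨(LinearEquiv.ofBijective _ hsnd).symm.trans (LinearEquiv.ofBijective _ hfst)⟩

end Graph

section ConnectingHomomorphism

variable {B A M' M M'' C : Type} [CommRing B] [CommRing A]
  [AddCommGroup M'] [Module A M'] [Module B M'] [AddCommGroup M] [Module A M] [Module B M]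
  [AddCommGroup M''] [Module A M''] [Module B M''] [AddCommGroup C] [Module A C]
  {u : Fin 4 → A} {ι : M' →ₗ[A] M} {D : M →ₗ[A] M''} {π : M'' →ₗ[A] C}
  {P' : ℤ → ℤ → Submodule B M'} {P : ℤ → ℤ → Submodule B M} {P'' : ℤ → ℤ → Submodule B M''}
  {t i : ℕ} {μ ν : ℤ}

section Exactness

/-- Exactness of `0 → P' a b → P a b → P'' a b → C` in all bidegrees `(a,b)`. -/
structure IsBigradedExact (ι : M' →ₗ[A] M) (D : M →ₗ[A] M'') (π : M'' →ₗ[A] C)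
    (P' : ℤ → ℤ → Submodule B M') (P : ℤ → ℤ → Submodule B M) (P'' : ℤ → ℤ → Submodule B M'') :
    Prop where
  injective : Function.Injective ι
  exists_ι_eq_iff : ∀ {a b x}, (∃ x' ∈ P' a b, ι x' = x) ↔ x ∈ P a b ∧ D x = 0
  exists_D_eq_iff : ∀ {a b z}, (∃ x ∈ P a b, D x = z) ↔ z ∈ P'' a b ∧ π z = 0

variable {a b : ℤ}

lemma IsBigradedExact.ι_mem (hE : IsBigradedExact ι D π P' P P'') {x : M'}
    (hx : x ∈ P' a b) : ι x ∈ P a b :=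
  (hE.exists_ι_eq_iff.mp ⟨x, hx, rfl⟩).1

lemma IsBigradedExact.D_ι (hE : IsBigradedExact ι D π P' P P'') {x : M'}
    (hx : x ∈ P' a b) : D (ι x) = 0 :=
  (hE.exists_ι_eq_iff.mp ⟨x, hx, rfl⟩).2

lemma IsBigradedExact.D_mem (hE : IsBigradedExact ι D π P' P P'') {x : M}
    (hx : x ∈ P a b) : D x ∈ P'' a b :=
  (hE.exists_D_eq_iff.mp ⟨x, hx, rfl⟩).1

lemma IsBigradedExact.D_comp_ι_comp (hE : IsBigradedExact ι D π P' P P'')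
    {v : Finset (Fin 4) → M'} (hv : v ∈ cechC P' t i μ ν) : D ∘ ι ∘ v = 0 := by
  funext J
  by_cases hJ : J.card = i
  · exact hE.D_ι ((hv J).1 hJ)
  · simp only [Function.comp_apply, (hv J).2 hJ, map_zero, Pi.zero_apply]

lemma IsBigradedExact.exists_ι_comp_eq (hE : IsBigradedExact ι D π P' P P'')
    {y : Finset (Fin 4) → M} (hy : y ∈ cechC P t i μ ν) (hD : D ∘ y = 0) :
    ∃ v ∈ cechC P' t i μ ν, ι ∘ v = y := by
  have hlift : ∀ J, ∃ x, (J.card = i → x ∈ P' (μ + t * i) (ν + t * i)) ∧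
      (J.card ≠ i → x = 0) ∧ ι x = y J := by
    intro J
    by_cases hJ : J.card = i
    · obtain ⟨x, hx, hxy⟩ := hE.exists_ι_eq_iff.mpr ⟨(hy J).1 hJ, congrFun hD J⟩
      exact ⟨x, fun _ => hx, fun h => absurd hJ h, hxy⟩
    · exact ⟨0, fun h => absurd h hJ, fun _ => rfl, by rw [map_zero, (hy J).2 hJ]⟩
  choose v hv hv0 hvy using hlift
  exact ⟨v, fun J => ⟨hv J, hv0 J⟩, funext hvy⟩

end Exactness

variable [Algebra B A] [IsScalarTower B A M'] [IsScalarTower B A M] [IsScalarTower B A M'']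

/-- The cocycle `w` of `M'` represents the image of the class of `z` under the connecting
homomorphism `H⁰(M''/D(M)) → H²(M')`, as witnessed by the cochain `y` of `M`. -/
structure IsConnecting (u : Fin 4 → A) (ι : M' →ₗ[A] M) (D : M →ₗ[A] M'')
    (P' : ℤ → ℤ → Submodule B M') (P : ℤ → ℤ → Submodule B M) (P'' : ℤ → ℤ → Submodule B M'')
    (t : ℕ) (μ ν : ℤ) (z : M'') (y : Finset (Fin 4) → M) (w : cocyc u P' t 2 μ ν) : Prop where
  mem : z ∈ P'' μ ν
  mem_cechC : y ∈ cechC P t 1 μ ν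
  D_comp : D ∘ y = cechD (B := B) u t (Pi.single ∅ z)
  ι_comp : ι ∘ w.1 = cechD (B := B) u t y

variable {z z' : M''} {y y' : Finset (Fin 4) → M} {w w' : cocyc u P' t 2 μ ν}

section Linear

lemma isConnecting_zero : IsConnecting u ι D P' P P'' t μ ν 0 0 0 where
  mem := zero_mem _
  mem_cechC := zero_mem _
  D_comp := by
    rw [Pi.single_zero, map_zero]
    exact funext fun _ => map_zero D
  ι_comp := by
    rw [map_zero]
    exact funext fun _ => map_zero ι

lemma IsConnecting.add (h : IsConnecting u ι D P' P P'' t μ ν z y w)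
    (h' : IsConnecting u ι D P' P P'' t μ ν z' y' w') :
    IsConnecting u ι D P' P P'' t μ ν (z + z') (y + y') (w + w') where
  mem := add_mem h.mem h'.mem
  mem_cechC := add_mem h.mem_cechC h'.mem_cechC
  D_comp := by
    rw [Pi.single_add, map_add, ← h.D_comp, ← h'.D_comp]
    exact funext fun _ => map_add D _ _
  ι_comp := by
    rw [map_add, ← h.ι_comp, ← h'.ι_comp]
    exact funext fun _ => map_add ι _ _

lemma IsConnecting.smul (b : B) (h : IsConnecting u ι D P' P P'' t μ ν z y w) :
    IsConnecting u ι D P' P P'' t μ ν (b • z) (b • y) (b • w) where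
  mem := Submodule.smul_mem _ b h.mem
  mem_cechC := Submodule.smul_mem _ b h.mem_cechC
  D_comp := by
    rw [Pi.single_smul, map_smul, ← h.D_comp]
    exact funext fun _ => D.map_smul_of_tower b _
  ι_comp := by
    rw [map_smul, ← h.ι_comp]
    exact funext fun _ => ι.map_smul_of_tower b _

lemma IsConnecting.cechTr (hc : TrComp u P') (hP : TrComp u P)
    (h : IsConnecting u ι D P' P P'' t μ ν z y w) (a : ℕ) :
    IsConnecting u ι D P' P P'' (t + a) μ ν z (cechTr (B := B) u a y)
      ⟨_, tr_cocyc u P' hc (a := a) w.2⟩ where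
  mem := h.mem
  mem_cechC := hP _ _ _ _ _ _ h.mem_cechC
  D_comp := by rw [← cechTr_comp, h.D_comp, cechTr_cechD, cechTr_single_empty]
  ι_comp := by rw [← cechTr_comp, h.ι_comp, cechTr_cechD]

lemma IsConnecting.exists_of_le (hc : TrComp u P') (hP : TrComp u P)
    (h : IsConnecting u ι D P' P P'' t μ ν z y w) {T : ℕ} (hT : t ≤ T) :
    ∃ y' w', IsConnecting u ι D P' P P'' T μ ν z y' w' ∧
      LCclass hc T 2 μ ν w' = LCclass hc t 2 μ ν w := by
  obtain ⟨a, rfl⟩ := Nat.exists_eq_add_of_le hT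
  exact ⟨_, _, h.cechTr hc hP a, LCclass_cechTr hc a w⟩

end Linear

section Bijective

lemma comp_single_empty (x : M) :
    D ∘ (Pi.single ∅ x : Finset (Fin 4) → M) = Pi.single ∅ (D x) :=
  funext fun J => (Pi.apply_single (fun _ => D) (fun _ => map_zero D) ∅ x J)

lemma cechD_eq_of_ι_comp (hι : Function.Injective ι) {v w : Finset (Fin 4) → M'}
    (h : cechD (B := B) u t (ι ∘ v) = ι ∘ w) : cechD (B := B) u t v = w :=
  hι.comp_left ((cechD_comp u t v ι).symm.trans h)

lemma IsBigradedExact.exists_isConnecting (hE : IsBigradedExact ι D π P' P P'')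
    (hP : RaisesDegree u P) (hz : z ∈ P'' μ ν) (hy : y ∈ cechC P t 1 μ ν)
    (hD : D ∘ y = cechD (B := B) u t (Pi.single ∅ z)) :
    ∃ w, IsConnecting u ι D P' P P'' t μ ν z y w := by
  obtain ⟨w, hw, hwy⟩ := hE.exists_ι_comp_eq (hP.cechD_mem_cechC hy)
    (by rw [← cechD_comp, hD, cechD_cechD])
  have hdw : cechD (B := B) u t w = 0 := by
    refine cechD_eq_of_ι_comp hE.injective ?_
    rw [hwy, cechD_cechD]
    exact funext fun _ => (map_zero ι).symm
  exact ⟨⟨w, hw, hdw⟩, hz, hy, hD, hwy⟩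

lemma IsBigradedExact.exists_isConnecting_of_smul_eq_zero (hE : IsBigradedExact ι D π P' P P'')
    (hP : RaisesDegree u P) (hP'' : RaisesDegree u P'') (hz : z ∈ P'' μ ν)
    (htor : ∀ j, u j ^ t • π z = 0) : ∃ y w, IsConnecting u ι D P' P P'' t μ ν z y w := by
  have hx : ∀ j, ∃ x ∈ P (μ + t) (ν + t), D x = u j ^ t • z := fun j =>
    hE.exists_D_eq_iff.mpr ⟨hP''.pow_smul_mem j t hz, by rw [map_smul, htor j]⟩
  choose x hx hDx using hx
  have hy : ∑ j, Pi.single {j} (x j) ∈ cechC P t 1 μ ν := sum_mem fun j _ =>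
    single_mem_cechC (Finset.card_singleton j) (mem_piece_of_eq (hx j) (by simp) (by simp))
  have hyj : ∀ j, (∑ l, Pi.single {l} (x l) : Finset (Fin 4) → M) {j} = x j := by
    intro j
    rw [Finset.sum_apply, Finset.sum_eq_single j, Pi.single_eq_same]
    · exact fun l _ hl => Pi.single_eq_of_ne (M := fun _ => M) (by simpa using hl.symm) _
    · simp
  refine ⟨_, hE.exists_isConnecting hP hz hy (eq_of_mem_cechC (comp_mem_cechC D
    (fun _ _ _ => hE.D_mem) hy) (hP''.cechD_mem_cechC (single_empty_mem_cechC hz))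
    fun J hJ => ?_)⟩
  obtain ⟨j, rfl⟩ := Finset.card_eq_one.mp hJ
  rw [Function.comp_apply, hyj, hDx, cechD_singleton, Pi.single_eq_same]

lemma IsConnecting.smul_eq_zero (hE : IsBigradedExact ι D π P' P P'')
    (h : IsConnecting u ι D P' P P'' t μ ν z y w) (j : Fin 4) : u j ^ t • π z = 0 := by
  have hDy : D (y {j}) = u j ^ t • z := by
    rw [← Function.comp_apply (f := D), h.D_comp, cechD_singleton, Pi.single_eq_same]
  have hy := (h.mem_cechC {j}).1 (Finset.card_singleton j)
  rw [← map_smul, ← hDy]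
  exact (hE.exists_D_eq_iff.mp ⟨_, hy, rfl⟩).2

lemma IsConnecting.mem_cobd (hE : IsBigradedExact ι D π P' P P'') (hP : RaisesDegree u P)
    (h : IsConnecting u ι D P' P P'' t μ ν z y w) (hz : π z = 0) :
    w.1 ∈ cobd u P' t 2 μ ν := by
  obtain ⟨x, hx, rfl⟩ := hE.exists_D_eq_iff.mpr ⟨h.mem, hz⟩
  have hdx := hP.cechD_mem_cechC (t := t) (single_empty_mem_cechC hx)
  have hDx : D ∘ cechD (B := B) u t (Pi.single ∅ x) = D ∘ y := by
    rw [h.D_comp, ← cechD_comp, comp_single_empty]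
  obtain ⟨v, hv, hvy⟩ := hE.exists_ι_comp_eq (sub_mem h.mem_cechC hdx)
    (funext fun J => by
      rw [Function.comp_apply, Pi.sub_apply, map_sub]
      exact sub_eq_zero.mpr (congrFun hDx J).symm)
  refine ⟨v, hv, cechD_eq_of_ι_comp hE.injective ?_⟩
  rw [hvy, map_sub, cechD_cechD, sub_zero, h.ι_comp]

lemma eq_zero_of_LCvanish_zero (h : LCvanish u P 0 μ ν) {x : M}
    (hx : x ∈ P μ ν) (hdx : cechD (B := B) u t (Pi.single ∅ x) = 0) : x = 0 := by
  obtain ⟨a, ha⟩ := h t _ ⟨single_empty_mem_cechC hx, hdx⟩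
  rw [cechTr_single_empty] at ha
  simpa using congrFun ((Submodule.mem_bot B).mp ha) ∅

lemma exists_cechD_single_empty_eq (h : LCvanish u P 1 μ ν) {w : Finset (Fin 4) → M}
    (hw : w ∈ cocyc u P t 1 μ ν) :
    ∃ a, ∃ x ∈ P μ ν, cechD (B := B) u (t + a) (Pi.single ∅ x) = cechTr (B := B) u a w := by
  obtain ⟨a, v, hv, hvw⟩ := h t w hw
  refine ⟨a, v ∅, mem_piece_of_eq ((hv ∅).1 Finset.card_empty) (by simp) (by simp), ?_⟩
  rw [← hvw]
  congr 1
  funext J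
  rcases eq_or_ne J ∅ with rfl | hJ
  · rw [Pi.single_eq_same]
  · rw [Pi.single_eq_of_ne hJ, (hv J).2 (by simpa using hJ)]

lemma IsConnecting.map_eq_zero (hE : IsBigradedExact ι D π P' P P'')
    (h₁ : LCvanish u P 1 μ ν) (h₀ : LCvanish u P'' 0 μ ν)
    (h : IsConnecting u ι D P' P P'' t μ ν z y w) (hw : w.1 ∈ cobd u P' t 2 μ ν) : π z = 0 := by
  obtain ⟨v, hv, hvw⟩ := hw
  have hyv : y - ι ∘ v ∈ cocyc u P t 1 μ ν := by
    refine ⟨sub_mem h.mem_cechC (comp_mem_cechC ι (fun _ _ _ => hE.ι_mem) hv), ?_⟩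
    refine LinearMap.mem_ker.mpr ?_
    rw [map_sub, cechD_comp, hvw, h.ι_comp, sub_self]
  obtain ⟨a, x, hx, hxy⟩ := exists_cechD_single_empty_eq h₁ hyv
  have hDy : D ∘ (y - ι ∘ v) = D ∘ y := by
    funext J
    rw [Function.comp_apply, Pi.sub_apply, map_sub]
    exact sub_eq_self.mpr (congrFun (hE.D_comp_ι_comp hv) J)
  have hDx : cechD (B := B) u (t + a) (Pi.single ∅ (D x)) =
      cechD (B := B) u (t + a) (Pi.single ∅ z) := by
    rw [← comp_single_empty, cechD_comp, hxy, ← cechTr_comp, hDy, h.D_comp, cechTr_cechD,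
      cechTr_single_empty]
  have hzx : z - D x = 0 := eq_zero_of_LCvanish_zero h₀ (t := t + a)
    (sub_mem h.mem (hE.D_mem hx)) (by
      rw [Pi.single_sub (f := fun _ => M''), map_sub, hDx, sub_self])
  exact (hE.exists_D_eq_iff.mp ⟨x, hx, (sub_eq_zero.mp hzx).symm⟩).2

lemma exists_isConnecting_of_LCvanish (hE : IsBigradedExact ι D π P' P P'') (hc : TrComp u P')
    (hP : TrComp u P) (h₂ : LCvanish u P 2 μ ν) (h₁ : LCvanish u P'' 1 μ ν)
    (w : cocyc u P' t 2 μ ν) : ∃ T z y w', IsConnecting u ι D P' P P'' T μ ν z y w' ∧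
      LCclass hc T 2 μ ν w' = LCclass hc t 2 μ ν w := by
  obtain ⟨a, y, hy, hyw⟩ := h₂ t _ (comp_mem_cocyc ι (fun _ _ _ => hE.ι_mem) w.2)
  have hDy : D ∘ y ∈ cocyc u P'' (t + a) 1 μ ν := by
    refine ⟨comp_mem_cechC D (fun _ _ _ => hE.D_mem) hy, LinearMap.mem_ker.mpr ?_⟩
    rw [cechD_comp, hyw, cechTr_comp]
    exact hE.D_comp_ι_comp (hc _ _ _ _ _ _ w.2.1)
  obtain ⟨b, z, hz, hzy⟩ := exists_cechD_single_empty_eq h₁ hDy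
  let w₁ : cocyc u P' (t + a) 2 μ ν := ⟨_, tr_cocyc u P' hc (a := a) w.2⟩
  refine ⟨t + a + b, z, cechTr (B := B) u b y, ⟨_, tr_cocyc u P' hc (a := b) w₁.2⟩,
    ⟨hz, hP _ _ _ _ _ _ hy, ?_, ?_⟩, (LCclass_cechTr hc b w₁).trans (LCclass_cechTr hc a w)⟩
  · rw [hzy, cechTr_comp]
  · rw [← cechTr_cechD, hyw, ← cechTr_comp, ← cechTr_comp]

end Bijective

section Isomorphism

variable [Module B C] [IsScalarTower B A C] {T : Submodule B C}

/-- The graph of the connecting homomorphism `H⁰(M''/D(M)) → H²(M')` in bidegree `(μ,ν)`, where `T`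
is the part of `H⁰(M''/D(M)) ⊆ C` lying in that bidegree. -/
def connectingGraph (ι : M' →ₗ[A] M) (D : M →ₗ[A] M'') (π : M'' →ₗ[A] C)
    (P'' : ℤ → ℤ → Submodule B M'') (T : Submodule B C) (hc : TrComp u P') (hP : TrComp u P)
    (μ ν : ℤ) : Submodule B (T × LCH u P' hc 2 μ ν) where
  carrier := {x | ∃ t z y w, IsConnecting u ι D P' P P'' t μ ν z y w ∧ π z = x.1.1 ∧
    LCclass hc t 2 μ ν w = x.2}
  zero_mem' := ⟨0, 0, 0, 0, isConnecting_zero, map_zero _, map_zero _⟩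
  add_mem' := by
    rintro x x' ⟨t, z, y, w, h, hz, hw⟩ ⟨t', z', y', w', h', hz', hw'⟩
    obtain ⟨y₁, w₁, h₁, hw₁⟩ := h.exists_of_le hc hP (le_max_left t t')
    obtain ⟨y₂, w₂, h₂, hw₂⟩ := h'.exists_of_le hc hP (le_max_right t t')
    refine ⟨_, _, _, _, h₁.add h₂, ?_, ?_⟩
    · rw [map_add, hz, hz']
      rfl
    · rw [map_add, hw₁, hw₂, hw, hw']
      rfl
  smul_mem' := by
    rintro b x ⟨t, z, y, w, h, hz, hw⟩
    refine ⟨_, _, _, _, h.smul b, ?_, ?_⟩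
    · rw [π.map_smul_of_tower, hz]
      rfl
    · rw [map_smul, hw]
      rfl

theorem IsBigradedExact.nonempty_linearEquiv (hE : IsBigradedExact ι D π P' P P'')
    (hc : TrComp u P') (hP : RaisesDegree u P) (hP'' : RaisesDegree u P'')
    (hT : ∀ x, x ∈ T ↔ (∃ z ∈ P'' μ ν, π z = x) ∧ ∃ t : ℕ, ∀ j, u j ^ t • x = 0)
    (h₁ : LCvanish u P 1 μ ν) (h₂ : LCvanish u P 2 μ ν)
    (h₀'' : LCvanish u P'' 0 μ ν) (h₁'' : LCvanish u P'' 1 μ ν) :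
    Nonempty (LCH u P' hc 2 μ ν ≃ₗ[B] T) := by
  refine nonempty_linearEquiv_of_graph (connectingGraph ι D π P'' T hc hP.trComp μ ν)
    (fun x => ?_) (fun c => ?_) (fun x hx => ?_) (fun c hx => ?_)
  · obtain ⟨⟨z, hz, hzx⟩, t, ht⟩ := (hT x).mp x.2
    obtain ⟨y, w, h⟩ := hE.exists_isConnecting_of_smul_eq_zero hP hP'' hz (hzx ▸ ht)
    exact ⟨LCclass hc t 2 μ ν w, t, z, y, w, h, hzx, rfl⟩
  · obtain ⟨t, w, rfl⟩ := exists_LCclass_eq hc c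
    obtain ⟨t', z, y, w', h, hw'⟩ := exists_isConnecting_of_LCvanish hE hc hP.trComp h₂ h₁'' w
    exact ⟨⟨π z, (hT _).mpr ⟨⟨z, h.mem, rfl⟩, t', h.smul_eq_zero hE⟩⟩, t', z, y, w', h, rfl, hw'⟩
  · obtain ⟨t, z, y, w, h, hz, hw⟩ := hx
    obtain ⟨a, ha⟩ := (LCclass_eq_zero_iff hc w).mp hw
    exact Subtype.ext (hz.symm.trans ((h.cechTr hc hP.trComp a).map_eq_zero hE h₁ h₀'' ha))
  · obtain ⟨t, z, y, w, h, hz, hw⟩ := hx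
    refine hw.symm.trans ((LCclass_eq_zero_iff hc w).mpr ⟨0, ?_⟩)
    rw [cechTr_zero]
    exact h.mem_cobd hE hP hz

end Isomorphism

end ConnectingHomomorphism

section Saturated

variable {k : Type} [Field k] {m n p : ℕ} {μ ν : ℤ}

lemma uR_pow_ne_zero (i : Fin 4) (t : ℕ) : uR k i ^ t ≠ 0 :=
  pow_ne_zero _ (mul_ne_zero (X_ne_zero _) (X_ne_zero _))

lemma isRelPrime_X {i j : Fin 4} (hij : i ≠ j) : IsRelPrime (X i : RR k) (X j) := by
  rw [(X_prime (R := k) (i := i)).irreducible.isRelPrime_iff_not_dvd]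
  simpa using hij

lemma isRelPrime_uR_zero_three (t : ℕ) : IsRelPrime (uR k 0 ^ t) (uR k 3 ^ t) := by
  rw [uR_zero, uR_three]
  exact IsRelPrime.pow (IsRelPrime.mul_left
    (IsRelPrime.mul_right (isRelPrime_X (by decide)) (isRelPrime_X (by decide)))
    (IsRelPrime.mul_right (isRelPrime_X (by decide)) (isRelPrime_X (by decide))))

/-- `u₀ᵗ` and `u₃ᵗ` are coprime and `u₃ᵗ w₀ = u₀ᵗ w₃`, so `u₀ᵗ` divides `w₀`. -/
lemma exists_eq_smul_of_cechD_eq_zero {t : ℕ} {w : Finset (Fin 4) → (Fin p → Fin 4) → RR k}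
    (h : cechD (B := k) (uR k) t w = 0) : ∃ z, ∀ i, w {i} = uR k i ^ t • z := by
  have hdvd : ∀ e, uR k 0 ^ t ∣ w {0} e := fun e =>
    (isRelPrime_uR_zero_three t).dvd_of_dvd_mul_left
      ⟨w {3} e, (congrFun (pow_smul_singleton_comm_of_cechD_eq_zero h
        (show (0 : Fin 4) < 3 by decide)) e).symm⟩
  choose z hz using hdvd
  have h0 : w {0} = uR k 0 ^ t • z := funext hz
  refine ⟨z, fun i => ?_⟩
  rcases eq_or_ne i 0 with rfl | hi
  · exact h0
  · refine smul_right_injective _ (uR_pow_ne_zero (k := k) 0 t) ?_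
    change uR k 0 ^ t • w {i} = uR k 0 ^ t • uR k i ^ t • z
    rw [pow_smul_singleton_comm_of_cechD_eq_zero h (Fin.pos_of_ne_zero hi), h0, smul_comm]

lemma LCvanish_tensorPiece_zero (S : Submodule (RR k) ((Fin p → Fin 4) → RR k)) :
    LCvanish (uR k) (tensorPiece m n S) 0 μ ν := by
  intro t w hw
  have hw0 : uR k 0 ^ t • w ∅ = 0 := by
    rw [← cechD_singleton (B := k) (uR k) t w 0, LinearMap.mem_ker.mp hw.2, Pi.zero_apply]
  refine ⟨0, (Submodule.mem_bot k).mpr ?_⟩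
  rw [cechTr_zero]
  refine eq_of_mem_cechC hw.1 (zero_mem _) fun J hJ => ?_
  rw [Finset.card_eq_zero.mp hJ]
  exact (smul_eq_zero.mp hw0).resolve_left (uR_pow_ne_zero 0 t)

lemma LCvanish_tensorPiece_one {S : Submodule (RR k) ((Fin p → Fin 4) → RR k)}
    (hS : ∀ r : RR k, r ≠ 0 → ∀ x, r • x ∈ S → x ∈ S) :
    LCvanish (uR k) (tensorPiece m n S) 1 μ ν := by
  intro t w hw
  obtain ⟨z, hz⟩ := exists_eq_smul_of_cechD_eq_zero (t := t) (w := S.subtype ∘ w) (by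
    rw [cechD_comp, LinearMap.mem_ker.mp hw.2]
    exact funext fun _ => map_zero _)
  have hzS : z ∈ S := hS _ (uR_pow_ne_zero 0 t) z (hz 0 ▸ (w {0}).2)
  have hzP : z ∈ KP k m n p μ ν := by
    refine mem_KP_of_smul_mem (uR_pow_ne_zero 0 t) (Rpiece_pow (uR_mem_Rpiece 0) t) ?_
    rw [← hz 0]
    exact mem_piece_of_eq (P := KP k m n p) ((hw.1 {0}).1 (Finset.card_singleton 0))
      (by simp) (by simp)
  have hzC : Pi.single ∅ ⟨z, hzS⟩ ∈ cechC (tensorPiece m n S) t 0 μ ν :=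
    single_empty_mem_cechC hzP
  refine ⟨0, Pi.single ∅ ⟨z, hzS⟩, hzC, ?_⟩
  rw [cechTr_zero]
  refine eq_of_mem_cechC ((isBigraded_tensorPiece S).raisesDegree.cechD_mem_cechC hzC) hw.1
    fun J hJ => ?_
  obtain ⟨i, rfl⟩ := Finset.card_eq_one.mp hJ
  rw [cechD_singleton, Pi.single_eq_same]
  exact Subtype.ext (hz i).symm

end Saturated

section KoszulHomology

variable {k : Type} [Field k] {f : Fin 4 → RR k} {m n q : ℕ} {μ ν : ℤ}

lemma mem_ZK_of_smul_mem {r : RR k} (hr : r ≠ 0) {x : (Fin q → Fin 4) → RR k}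
    (hx : r • x ∈ ZK k f q) : x ∈ ZK k f q := by
  cases q with
  | zero => exact mem_AltT_of_smul_mem hr hx
  | succ q =>
    refine ⟨mem_AltT_of_smul_mem hr hx.1, LinearMap.mem_ker.mpr ?_⟩
    have h : r • DK k f q x = 0 := (map_smul _ r x).symm.trans hx.2
    exact (smul_eq_zero.mp h).resolve_left hr

variable (k f q) in
/-- The class of a Koszul cycle in Koszul homology. -/
def HKmk : ZK k f q →ₗ[RR k] HK k f q :=
  (Submodule.comap (ZK k f q).subtype (BK k f q)).mkQ

lemma HKmk_eq_zero_iff (z : ZK k f q) : HKmk k f q z = 0 ↔ z.1 ∈ BK k f q :=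
  Submodule.Quotient.mk_eq_zero _

lemma mem_TorPH {x : HK k f q} : x ∈ TorPH k f m n q μ ν ↔
    (∃ z ∈ PZ k f m n q μ ν, HKmk k f q z = x) ∧ ∃ t : ℕ, ∀ i, uR k i ^ t • x = 0 := Iff.rfl

lemma isBigradedExact_koszul (hf : ∀ i, f i ∈ Rpiece k m n) :
    IsBigradedExact (Submodule.inclusion (ZK_le_AltT (f := f) (p := q + 1))) (koszulD k f q)
      (HKmk k f q) (PZ k f m n (q + 1)) (tensorPiece m n (AltT k (q + 1))) (PZ k f m n q) where
  injective := Submodule.inclusion_injective _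
  exists_ι_eq_iff {a b x} := by
    constructor
    · rintro ⟨z, hz, rfl⟩
      exact ⟨hz, Subtype.ext z.2.2⟩
    · rintro ⟨hx, hDx⟩
      exact ⟨⟨x.1, x.2, congrArg Subtype.val hDx⟩, hx, rfl⟩
  exists_D_eq_iff {a b z} := by
    rw [HKmk_eq_zero_iff]
    constructor
    · rintro ⟨x, hx, rfl⟩
      exact ⟨koszulD_mem_PZ hf hx, x.1, x.2, rfl⟩
    · exact fun h => exists_koszulD_eq_of_mem_BK hf h.1 h.2

theorem nonempty_linearEquiv_TorPH (hf : ∀ i, f i ∈ Rpiece k m n)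
    (hc : TrComp (uR k) (PZ k f m n (q + 1)))
    (h : LCvanish (uR k) (KP k m n (q + 1)) 2 μ ν) :
    Nonempty (LCH (uR k) (PZ k f m n (q + 1)) hc 2 μ ν ≃ₗ[k] TorPH k f m n q μ ν) :=
  (isBigradedExact_koszul hf).nonempty_linearEquiv hc (isBigraded_tensorPiece _).raisesDegree
    isBigraded_PZ.raisesDegree (fun _ => mem_TorPH)
    (LCvanish_tensorPiece_one fun _ hr _ => mem_AltT_of_smul_mem hr)
    (LCvanish_tensorPiece_AltT h) (LCvanish_tensorPiece_zero _)
    (LCvanish_tensorPiece_one fun _ hr _ => mem_ZK_of_smul_mem hr)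

end KoszulHomology

theorem statement2_general {k : Type} [Field k] {f : Fin 4 → RR k} {m n : ℕ}
    (hf : ∀ i, f i ∈ Rpiece k m n) (hf0 : f ≠ 0) (p : ℕ) (μ ν : ℤ) :
    (LCvanish (uR k) (KP k m n (p + 1)) 2 μ ν →
      Nonempty (LCH (uR k) (PZ k f m n (p + 1)) isBigraded_PZ.raisesDegree.trComp 2 μ ν ≃ₗ[k]
        TorPH k f m n p μ ν)) ∧
    (LCvanish (uR k) (KP k m n (p + 1)) 3 μ ν → LCvanish (uR k) (PZ k f m n p) 3 μ ν) :=
  ⟨nonempty_linearEquiv_TorPH hf _, LCvanish_PZ_three hf hf0⟩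

theorem statement2
    (m n : ℕ) (hm : 1 ≤ m) (hn : 1 ≤ n)
    -- the `fᵢ` are bihomogeneous of bidegree `(m,n)`
    (hf : ∀ i, f i ∈ Rpiece k m n)
    -- the `fᵢ` minimally generate the ideal `I = (f₀,…,f₃)`
    (hmin : LinearIndependent k f)
    -- the closure of the image of `φ` is a surface `𝒮 = V(F) ⊆ ℙ³`
    (F : SS k) (hF : F ≠ 0)
    (hFeq : RingHom.ker (aeval (R := k) f).toRingHom = Ideal.span {F})
    -- the base scheme `ℬ = V(I)` is finite
    (hBfin : (BasePts k f).Finite)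
    -- every base point of `φ` is locally defined by at most three generators
    (hloc : ∀ a b, IsBasePoint k f a b → LocGen k (Ideal.span (Set.range f)) a b 3)
    -- `r = Σ_p d_p` is the degree of the base scheme, i.e. the eventual value of the
    -- Hilbert function of `R/I`
    (r : ℕ)
    (hr : ∃ A₀ B₀ : ℤ, ∀ μ ν : ℤ, A₀ ≤ μ → B₀ ≤ ν →
      HFq k (Ideal.span (Set.range f)) μ ν = r)

    -- the natural compatibility of the bigrading of the cycles `Z_p` with
    -- multiplication by products of the generators of `𝔪` (a true, purely
    -- degree-theoretic side condition)
    (hc : ∀ p : ℕ, TrComp (uR k) (fun a b => PZ k f m n p a b)) :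
    ∀ p : ℕ, (p = 1 ∨ p = 2) →
      -- (a) `H²_𝔪(Z_p)_{(μ,ν)} ≅ H⁰_𝔪(H_{p−1})_{(μ,ν)}` whenever
      -- `H²_𝔪(K_p)_{(μ,ν)} = 0`:
      (∀ μ ν : ℤ, LCvanish (B := k) (uR k) (KP k m n p) 2 μ ν →
        Nonempty ((LCH (uR k) (fun a b => PZ k f m n p a b) (hc p) 2 μ ν) ≃ₗ[k]
          ↥(TorPH k f m n (p - 1) μ ν))) ∧
      -- (b) `H³_𝔪(Z_p)_{(μ,ν)} = 0` whenever `H²_𝔪(K_{p−1})_{(μ,ν)} =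
      -- H²_𝔪(K_p)_{(μ,ν)} = H³_𝔪(K_{p+1})_{(μ,ν)} = 0`:
      (∀ μ ν : ℤ,
        LCvanish (B := k) (uR k) (KP k m n (p - 1)) 2 μ ν →
        LCvanish (B := k) (uR k) (KP k m n p) 2 μ ν →
        LCvanish (B := k) (uR k) (KP k m n (p + 1)) 3 μ ν →
        LCvanish (B := k) (uR k) (fun a b => PZ k f m n p a b) 3 μ ν) := by
  have hgen := statement2_general hf (fun h => hmin.ne_zero 0 (congrFun h 0))
  rintro p (rfl | rfl)
  · exact ⟨fun μ ν => (hgen 0 μ ν).1, fun μ ν _ _ => (hgen 1 μ ν).2⟩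
  · exact ⟨fun μ ν => (hgen 1 μ ν).1, fun μ ν _ _ => (hgen 2 μ ν).2⟩
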